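/- Let γ = 1/(3L_f) with L_f = L_ψ + L_ω, and assume additionally that h is β_h-Lipschitz. Let (y_t, z_t, x_t) be the iterates of the VR-TOS algorithm with uniform q-memorization and x̄_t = (∑_{k=0}^t x_k)/(t+1) the ergodic average. Then for any y* ∈ Fix(G_γ) and any minimizer x* of the primal objective P, E[P(x̄_t) − P(x*)] ≤ (10n/(q(t+1))) · [ (6L_f q/(20n))‖z_0 − x*‖² + (3L_f q/(2n))‖y_0 − y*‖² + (q/(15 n L_f))β_h² + H_0 ]. -/

import Mathlib

open Finset
open scoped RealInnerProductSpace

noncomputable section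

variable {p : ℕ}

/-- proper, lower semicontinuous, convex extended-real function. -/
structure ProperLscConvex (g : EuclideanSpace ℝ (Fin p) → EReal) : Prop where
  proper : ∃ x, g x ≠ ⊤
  ne_bot : ∀ x, g x ≠ ⊥
  lsc : LowerSemicontinuous g
  convex : ∀ x y : EuclideanSpace ℝ (Fin p), ∀ a b : ℝ, 0 ≤ a → 0 ≤ b → a + b = 1 →
    g (a • x + b • y) ≤ (a : EReal) * g x + (b : EReal) * g y

/-- `z = prox_{γ g}(x)`. -/
def IsProx (γ : ℝ) (g : EuclideanSpace ℝ (Fin p) → EReal) (x z : EuclideanSpace ℝ (Fin p)) : Prop :=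
  ∀ w, g z + (((1 / (2 * γ)) * ‖x - z‖ ^ 2 : ℝ) : EReal)
      ≤ g w + (((1 / (2 * γ)) * ‖x - w‖ ^ 2 : ℝ) : EReal)

/-- Fenchel conjugate. -/
def fconj (g : EuclideanSpace ℝ (Fin p) → EReal) (u : EuclideanSpace ℝ (Fin p)) : EReal :=
  ⨆ x, ((⟪x, u⟫ : ℝ) : EReal) - g x

/-- The Lagrangian `L(x, u) = f(x) + g(x) + ⟨x, u⟩ − h*(u)`. -/
def Lagr (f : EuclideanSpace ℝ (Fin p) → ℝ) (g h : EuclideanSpace ℝ (Fin p) → EReal)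
    (x u : EuclideanSpace ℝ (Fin p)) : EReal :=
  ((f x : ℝ) : EReal) + g x + ((⟪x, u⟫ : ℝ) : EReal) - fconj h u

/-- extension of a finite sequence of draws to an infinite one. -/
def extSeq {S : Type} [Inhabited S] (T : ℕ) (v : Fin T → S) : ℕ → S :=
  fun k => if hk : k < T then v ⟨k, hk⟩ else default

/-- probability of a finite sequence of independent draws with weights `w`. -/
def prodW {S : Type} [Fintype S] (w : S → ℝ) (T : ℕ) (v : Fin T → S) : ℝ :=
  ∏ k, w (v k)

/-!
For a fixed point `ys` of `G_γ` put `s = prox_{γh}(ys)`. The subgradients of `g` and `h` at `s`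
selected by the two proximal steps add up to `-∇f(s)`, so `s` minimizes `P`, and every minimizer has
the same component gradients as `s`.

One iteration from the state `(y, α)` to `(y⁺, α⁺)` obeys
`f(x) + g(x) + h(z) - P(s) ≤ (‖y - s‖² - ‖y⁺ - s‖²) / (2γ) + noise`, and the expected noise is at
most the normalized squared distance `M(α)` of the memory from the gradients `∇ψ_i(s)`. The Lyapunov
function `V(y, α) = ‖y - ys‖² / (2γ) + (4/3) (n/q) M(α)` drops in expectation by at least
`(2/3) M(α)`, so `(3/2) V` pays for the noise of all iterations.

It also pays for two boundary terms of the telescoped inequality. Since `∑ (x_k - z_k) = y_T - y_0`,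
moving the argument of the `β`-Lipschitz function `h` from `z_k` to `x_k` costs `β ‖y_T - y_0‖`, and
since `‖ys - s‖ ≤ γ β`, distances to `s` can be traded for distances to `ys`.
-/

section Convexity

variable {E : Type*} [NormedAddCommGroup E] [InnerProductSpace ℝ E]

/-- `u` is a subgradient at `x` of the extended-valued function equal to the real-valued `φ` on its
domain `D` and to `+∞` elsewhere. -/
def IsSubgradientOn (φ : E → ℝ) (D : Set E) (u x : E) : Prop :=
  ∀ w ∈ D, φ x + ⟪u, w - x⟫ ≤ φ w

lemma IsSubgradientOn.inner_sub_nonneg {φ : E → ℝ} {D : Set E} {u v x y : E}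
    (hu : IsSubgradientOn φ D u x) (hv : IsSubgradientOn φ D v y) (hx : x ∈ D) (hy : y ∈ D) :
    0 ≤ ⟪u - v, x - y⟫ := by
  have hxy := hu y hy
  have hyx := hv x hx
  rw [← neg_sub x y, inner_neg_right] at hxy
  rw [inner_sub_left]
  linarith

lemma IsSubgradientOn.norm_le {φ : E → ℝ} {u x : E} {β : ℝ}
    (hu : IsSubgradientOn φ Set.univ u x) (hβ : 0 ≤ β)
    (hφ : ∀ x y, φ x ≤ φ y + β * ‖x - y‖) : ‖u‖ ≤ β := by
  have hsub := hu (x + u) (Set.mem_univ _)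
  have hlip := hφ (x + u) x
  rw [add_sub_cancel_left] at hsub hlip
  rw [real_inner_self_eq_norm_mul_norm] at hsub
  rcases (norm_nonneg u).eq_or_lt with h0 | hpos
  · rwa [← h0]
  · exact le_of_mul_le_mul_right (by linarith) hpos

lemma isSubgradientOn_of_add_mul_norm_sq_le {φ : E → ℝ} {D : Set E} {c : ℝ} {a z : E}
    (hφ : ConvexOn ℝ D φ) (hz : z ∈ D)
    (hmin : ∀ w ∈ D, φ z + c * ‖a - z‖ ^ 2 ≤ φ w + c * ‖a - w‖ ^ 2) :
    IsSubgradientOn φ D ((2 * c) • (a - z)) z := by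
  intro w hw
  have hsegment (t : ℝ) (ht : t ∈ Set.Ioo (0 : ℝ) 1) :
      φ z + 2 * c * ⟪a - z, w - z⟫ - φ w ≤ t * (c * ‖w - z‖ ^ 2) := by
    have ht' : 0 ≤ 1 - t := sub_nonneg.2 ht.2.le
    have hvalue := hmin _ (hφ.1 hz hw ht' ht.1.le (sub_add_cancel 1 t))
    have hconvex := hφ.2 hz hw ht' ht.1.le (sub_add_cancel 1 t)
    have hpoint : a - ((1 - t) • z + t • w) = (a - z) - t • (w - z) := by module
    rw [hpoint, norm_sub_sq_real (a - z), real_inner_smul_right, norm_smul,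
      Real.norm_of_nonneg ht.1.le] at hvalue
    simp only [smul_eq_mul] at hconvex
    exact le_of_mul_le_mul_left (by linarith) ht.1
  have hlimit : Filter.Tendsto (fun t : ℝ => t * (c * ‖w - z‖ ^ 2)) (nhdsWithin 0 (Set.Ioi 0))
      (nhds 0) :=
    ((continuous_mul_const _).tendsto' 0 0 (zero_mul _)).mono_left nhdsWithin_le_nhds
  have hle := ge_of_tendsto hlimit (Filter.eventually_of_mem (Ioo_mem_nhdsGT one_pos) hsegment)
  rw [real_inner_smul_left]
  linarith

/-- `P` maps into `D` and satisfies the optimality condition of the proximal map of `γ φ`, where `φ`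
is taken to be `+∞` outside `D`. -/
structure IsProxMapOn (γ : ℝ) (φ : E → ℝ) (D : Set E) (P : E → E) : Prop where
  mem : ∀ a, P a ∈ D
  subgradient : ∀ a, IsSubgradientOn φ D (γ⁻¹ • (a - P a)) (P a)

lemma IsProxMapOn.subgradient_reflected {γ : ℝ} {φ : E → ℝ} {D : Set E} {P : E → E}
    (hP : IsProxMapOn γ φ D P) (hγ : γ ≠ 0) (y z v : E) :
    IsSubgradientOn φ D
      (γ⁻¹ • (z - P (2 • z - y - γ • v)) - γ⁻¹ • (y - z) - v) (P (2 • z - y - γ • v)) := by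
  convert hP.subgradient (2 • z - y - γ • v) using 1
  rw [← inv_smul_smul₀ hγ v, smul_inv_smul₀ hγ, ← smul_sub, ← smul_sub, two_smul]
  congr 1
  abel

lemma inner_le_mul_norm_sq_add {c : ℝ} (hc : 0 < c) (a b : E) :
    ⟪a, b⟫ ≤ c * ‖a‖ ^ 2 + 1 / (4 * c) * ‖b‖ ^ 2 := by
  have hsq : c * ‖a‖ ^ 2 + 1 / (4 * c) * ‖b‖ ^ 2 - ‖a‖ * ‖b‖
      = 1 / (4 * c) * (2 * c * ‖a‖ - ‖b‖) ^ 2 := by field_simp; ring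
  have hnonneg : 0 ≤ 1 / (4 * c) * (2 * c * ‖a‖ - ‖b‖) ^ 2 := by positivity
  linarith [real_inner_le_norm a b]

lemma norm_sub_sq_le_two_mul (a b : E) : ‖a - b‖ ^ 2 ≤ 2 * ‖a‖ ^ 2 + 2 * ‖b‖ ^ 2 := by
  have h := parallelogram_law_with_norm ℝ a b
  nlinarith [sq_nonneg ‖a + b‖]

lemma sum_norm_sub_mean_sq_le {ι : Type*} [Fintype ι] (X : ι → E) :
    ∑ i, ‖X i - (Fintype.card ι : ℝ)⁻¹ • ∑ j, X j‖ ^ 2 ≤ ∑ i, ‖X i‖ ^ 2 := by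
  rcases isEmpty_or_nonempty ι with _ | _
  · simp only [univ_eq_empty, sum_empty, le_refl]
  set m := (Fintype.card ι : ℝ)⁻¹ • ∑ j, X j
  have hsum : ∑ j, X j = (Fintype.card ι : ℝ) • m :=
    (smul_inv_smul₀ (Nat.cast_ne_zero.2 Fintype.card_ne_zero) _).symm
  have hvar : ∑ i, ‖X i - m‖ ^ 2 = ∑ i, ‖X i‖ ^ 2 - Fintype.card ι * ‖m‖ ^ 2 := by
    simp only [norm_sub_sq_real, sum_add_distrib, sum_sub_distrib, ← mul_sum, ← sum_inner, hsum,
      real_inner_smul_left, real_inner_self_eq_norm_sq, sum_const, card_univ, nsmul_eq_mul]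
    ring
  rw [hvar]
  exact sub_le_self _ (by positivity)

/-- The Bregman distance from `y` to `x` of a function `φ` with gradient field `φ'`. -/
def bregman (φ : E → ℝ) (φ' : E → E) (x y : E) : ℝ :=
  φ x - φ y - ⟪φ' y, x - y⟫

/-- `φ` is convex on the whole space and its gradient field `φ'` is `L`-Lipschitz. -/
structure IsSmoothConvex [CompleteSpace E] (φ : E → ℝ) (φ' : E → E) (L : ℝ) : Prop where
  convexOn : ConvexOn ℝ Set.univ φ
  hasGradientAt : ∀ x, HasGradientAt φ (φ' x) x
  norm_sub_le : ∀ x y, ‖φ' x - φ' y‖ ≤ L * ‖x - y‖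

lemma hasDerivAt_comp_line [CompleteSpace E] {φ : E → ℝ} {x d u : E} {t : ℝ}
    (h : HasGradientAt φ u (x + t • d)) :
    HasDerivAt (fun s : ℝ => φ (x + s • d)) ⟪u, d⟫ t := by
  have hline : HasDerivAt (fun s : ℝ => x + s • d) d t := by
    simpa only [id, one_smul] using ((hasDerivAt_id t).smul_const d).const_add x
  exact h.hasFDerivAt.comp_hasDerivAt t hline

namespace IsSmoothConvex

variable [CompleteSpace E] {φ ω : E → ℝ} {φ' ω' : E → E} {L M : ℝ}

lemma bregman_nonneg (h : IsSmoothConvex φ φ' L) (x y : E) : 0 ≤ bregman φ φ' x y := by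
  have hline : ConvexOn ℝ Set.univ (fun t : ℝ => φ (y + t • (x - y))) := by
    have := h.convexOn.comp_affineMap (AffineMap.lineMap y x)
    simpa only [Set.preimage_univ, Function.comp_def, AffineMap.lineMap_apply_module', add_comm]
      using this
  have hslope := hline.le_slope_of_hasDerivAt (Set.mem_univ 0) (Set.mem_univ 1) zero_lt_one
    (hasDerivAt_comp_line (h.hasGradientAt _))
  simp only [zero_smul, add_zero, slope_def_field, one_smul, add_sub_cancel, sub_zero,
    div_one] at hslope
  exact sub_nonneg.2 hslope

lemma bregman_le (h : IsSmoothConvex φ φ' L) (x y : E) :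
    bregman φ φ' x y ≤ L / 2 * ‖x - y‖ ^ 2 := by
  set d := x - y with hd
  have hderiv (t : ℝ) : HasDerivAt
      (fun s : ℝ => φ (y + s • d) - s * ⟪φ' y, d⟫ - L / 2 * s ^ 2 * ‖d‖ ^ 2)
      (⟪φ' (y + t • d), d⟫ - ⟪φ' y, d⟫ - L * t * ‖d‖ ^ 2) t := by
    have hquad : HasDerivAt (fun s : ℝ => L / 2 * s ^ 2 * ‖d‖ ^ 2) (L * t * ‖d‖ ^ 2) t :=
      (((hasDerivAt_pow 2 t).const_mul (L / 2)).mul_const _).congr_deriv (by push_cast; ring)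
    exact ((hasDerivAt_comp_line (h.hasGradientAt _)).sub (hasDerivAt_mul_const _)).sub hquad
  have hanti := antitoneOn_of_hasDerivWithinAt_nonpos (convex_Icc (0 : ℝ) 1)
    (fun t _ => (hderiv t).continuousAt.continuousWithinAt)
    (fun t _ => (hderiv t).hasDerivWithinAt) (fun t ht => by
      rw [interior_Icc] at ht
      have hlip := h.norm_sub_le (y + t • d) y
      rw [add_sub_cancel_left, norm_smul, Real.norm_of_nonneg ht.1.le] at hlip
      rw [← inner_sub_left]
      nlinarith [real_inner_le_norm (φ' (y + t • d) - φ' y) d, norm_nonneg d])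
  have h01 := hanti (Set.left_mem_Icc.2 zero_le_one) (Set.right_mem_Icc.2 zero_le_one) zero_le_one
  simp only [one_smul, hd, add_sub_cancel, zero_smul, add_zero] at h01
  unfold bregman
  linarith

/-- Compare the lower bound at `y` with the upper bound at `x`, both taken at the gradient step
`x - L⁻¹ • (φ' x - φ' y)`. -/
lemma norm_sub_sq_le_bregman (h : IsSmoothConvex φ φ' L) (hL : 0 < L) (x y : E) :
    ‖φ' x - φ' y‖ ^ 2 ≤ 2 * L * bregman φ φ' x y := by
  set d := φ' x - φ' y
  have hlower := h.bregman_nonneg (x - L⁻¹ • d) y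
  have hupper := h.bregman_le (x - L⁻¹ • d) x
  have hnorm : ⟪φ' x, d⟫ - ⟪φ' y, d⟫ = ‖d‖ ^ 2 := by
    rw [← inner_sub_left, real_inner_self_eq_norm_sq]
  have hstep : x - L⁻¹ • d - y = (x - y) - L⁻¹ • d := by abel
  simp only [bregman, hstep, sub_sub_cancel_left, inner_sub_right, inner_neg_right,
    real_inner_smul_right, norm_neg, norm_smul, Real.norm_of_nonneg (inv_nonneg.2 hL.le)]
    at hlower hupper ⊢
  have hquad : L / 2 * (L⁻¹ * ‖d‖) ^ 2 = L⁻¹ * ‖d‖ ^ 2 / 2 := by field_simp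
  have hgap : L⁻¹ * ‖d‖ ^ 2 / 2 ≤ φ x - φ y - (⟪φ' y, x⟫ - ⟪φ' y, y⟫) := by
    have : L⁻¹ * ‖d‖ ^ 2 = L⁻¹ * ⟪φ' x, d⟫ - L⁻¹ * ⟪φ' y, d⟫ := by rw [← hnorm]; ring
    linarith
  calc ‖d‖ ^ 2 = 2 * L * (L⁻¹ * ‖d‖ ^ 2 / 2) := by field_simp
    _ ≤ 2 * L * (φ x - φ y - (⟪φ' y, x⟫ - ⟪φ' y, y⟫)) := by gcongr

lemma add (hφ : IsSmoothConvex φ φ' L) (hω : IsSmoothConvex ω ω' M) :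
    IsSmoothConvex (fun x => φ x + ω x) (fun x => φ' x + ω' x) (L + M) where
  convexOn := hφ.convexOn.add hω.convexOn
  hasGradientAt x := by
    rw [hasGradientAt_iff_hasFDerivAt, map_add]
    exact (hφ.hasGradientAt x).hasFDerivAt.add (hω.hasGradientAt x).hasFDerivAt
  norm_sub_le x y := by
    rw [add_sub_add_comm, add_mul]
    exact (norm_add_le _ _).trans (add_le_add (hφ.norm_sub_le x y) (hω.norm_sub_le x y))

/-- On the zero space Lipschitz constants may be negative, so `L ≤ L + M` is not available. -/
lemma weaken (hφ : IsSmoothConvex φ φ' L) (hω : IsSmoothConvex ω ω' M) :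
    IsSmoothConvex φ φ' (L + M) where
  convexOn := hφ.convexOn
  hasGradientAt := hφ.hasGradientAt
  norm_sub_le x y := by
    rw [add_mul]
    linarith [hφ.norm_sub_le x y, (norm_nonneg _).trans (hω.norm_sub_le x y)]

lemma mean {n : ℕ} (hn : 0 < n) {ψ : Fin n → E → ℝ} {ψ' : Fin n → E → E}
    (hψ : ∀ i, IsSmoothConvex (ψ i) (ψ' i) L) :
    IsSmoothConvex (fun x => (n : ℝ)⁻¹ * ∑ i, ψ i x) (fun x => (n : ℝ)⁻¹ • ∑ i, ψ' i x) L where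
  convexOn := by
    have hsum : ConvexOn ℝ Set.univ (fun x => ∑ i, ψ i x) := by
      refine ⟨convex_univ, fun x _ y _ a b ha hb hab => ?_⟩
      simp only [smul_sum, ← sum_add_distrib]
      exact sum_le_sum fun i _ => (hψ i).convexOn.2 (Set.mem_univ x) (Set.mem_univ y) ha hb hab
    exact hsum.smul (by positivity)
  hasGradientAt x := by
    rw [hasGradientAt_iff_hasFDerivAt, map_smul, map_sum]
    exact (HasFDerivAt.fun_sum fun i _ => ((hψ i).hasGradientAt x).hasFDerivAt).const_mul _
  norm_sub_le x y := by
    rw [← smul_sub, ← sum_sub_distrib, norm_smul, Real.norm_of_nonneg (by positivity),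
      inv_mul_le_iff₀ (by positivity)]
    calc ‖∑ i, (ψ' i x - ψ' i y)‖ ≤ ∑ _i : Fin n, L * ‖x - y‖ :=
          norm_sum_le_of_le _ fun i _ => (hψ i).norm_sub_le x y
      _ = n * (L * ‖x - y‖) := by simp only [sum_const, card_univ, Fintype.card_fin, nsmul_eq_mul]

end IsSmoothConvex

/-- The pointwise average of `ψ` plus `ω`. At real-valued functions it is the smooth objective `f`,
and at the gradients of `ψ` and `ω` it is the gradient of `f`. -/
def meanAdd {X V : Type*} [AddCommGroup V] [Module ℝ V] {n : ℕ} (ψ : Fin n → X → V) (ω : X → V) :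
    X → V :=
  fun x => (n : ℝ)⁻¹ • ∑ j, ψ j x + ω x

section FiniteSum

variable {n : ℕ} {ψ : Fin n → E → ℝ} {ψ' : Fin n → E → E} {ω : E → ℝ} {ω' : E → E} {L M : ℝ}

lemma meanAdd_add_zero {X V : Type*} [AddCommGroup V] [Module ℝ V] (hn : 0 < n)
    (ψ : Fin n → X → V) (ω : X → V) :
    meanAdd (fun i x => ψ i x + ω x) (fun _ => 0) = meanAdd ψ ω := by
  funext x
  have hn' : (n : ℝ) ≠ 0 := by positivity
  simp only [meanAdd, sum_add_distrib, sum_const, card_univ, Fintype.card_fin, smul_add, add_zero,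
    ← Nat.cast_smul_eq_nsmul ℝ n, inv_smul_smul₀ hn']

lemma bregman_meanAdd (x y : E) :
    bregman (meanAdd ψ ω) (meanAdd ψ' ω') x y
      = (n : ℝ)⁻¹ * ∑ i, bregman (ψ i) (ψ' i) x y + bregman ω ω' x y := by
  simp only [bregman, meanAdd, smul_eq_mul, inner_add_left, real_inner_smul_left, sum_inner,
    sum_sub_distrib]
  ring

variable [CompleteSpace E]

lemma IsSmoothConvex.meanAdd (hn : 0 < n) (hψ : ∀ i, IsSmoothConvex (ψ i) (ψ' i) L)
    (hω : IsSmoothConvex ω ω' M) : IsSmoothConvex (meanAdd ψ ω) (meanAdd ψ' ω') (L + M) :=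
  (IsSmoothConvex.mean hn hψ).add hω

lemma sum_norm_sub_sq_le_bregman_meanAdd (hn : 0 < n) (hL : 0 < L)
    (hψ : ∀ i, IsSmoothConvex (ψ i) (ψ' i) L) {x y : E} (hω : 0 ≤ bregman ω ω' x y) :
    ∑ i, ‖ψ' i x - ψ' i y‖ ^ 2 ≤ 2 * L * n * bregman (meanAdd ψ ω) (meanAdd ψ' ω') x y := by
  calc ∑ i, ‖ψ' i x - ψ' i y‖ ^ 2
      ≤ ∑ i, 2 * L * bregman (ψ i) (ψ' i) x y :=
        sum_le_sum fun i _ => (hψ i).norm_sub_sq_le_bregman hL x y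
    _ ≤ 2 * L * (∑ i, bregman (ψ i) (ψ' i) x y + n * bregman ω ω' x y) := by
        rw [← mul_sum]
        gcongr
        exact le_add_of_nonneg_right (by positivity)
    _ = 2 * L * n * bregman (meanAdd ψ ω) (meanAdd ψ' ω') x y := by
        rw [bregman_meanAdd]
        field_simp

lemma sum_norm_add_sub_sq_le_bregman_meanAdd (hn : 0 < n) (hLM : 0 < L + M)
    (hψ : ∀ i, IsSmoothConvex (ψ i) (ψ' i) L) (hω : IsSmoothConvex ω ω' M) (x y : E) :
    ∑ i, ‖(ψ' i x + ω' x) - (ψ' i y + ω' y)‖ ^ 2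
      ≤ 2 * (L + M) * n * bregman (meanAdd ψ ω) (meanAdd ψ' ω') x y := by
  have hzero : 0 ≤ bregman (fun _ => 0) (fun _ => 0) x y := by
    simp only [bregman, inner_zero_left, sub_self, le_refl]
  have h := sum_norm_sub_sq_le_bregman_meanAdd hn hLM (fun i => (hψ i).add hω) hzero
  rwa [meanAdd_add_zero hn, meanAdd_add_zero hn] at h

end FiniteSum

section SplittingStep

variable {γ : ℝ} {z x s r rs v vs : E}

/-- One iteration `z ↦ x` of three-operator splitting read off from its optimality conditions:
`γ⁻¹ • (z - x) - r - v` is the subgradient of `g` selected by the second proximal step, `r` that of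
`h` selected by the first one, and `z + γ • r`, `x + γ • r` are the old and the new `y`. -/
lemma objective_gap_le {f G H : E → ℝ} {f' : E → E} {D : Set E} {L : ℝ} (hγ : 0 < γ)
    (hγL : 3 * γ * L ≤ 1) (hf : bregman f f' x z ≤ L / 2 * ‖x - z‖ ^ 2)
    (hG : IsSubgradientOn G D (γ⁻¹ • (z - x) - r - v) x) (hH : IsSubgradientOn H Set.univ r z)
    (hs : s ∈ D) :
    f x + G x + H z - (f s + G s + H s)
      ≤ 1 / (2 * γ) * (‖z + γ • r - s‖ ^ 2 - ‖x + γ • r - s‖ ^ 2)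
        + (⟪f' z - v, z - s⟫ - bregman f f' s z + 3 * γ / 4 * ‖f' z - v‖ ^ 2) := by
  have hyoung : ⟪f' z - v, x - z⟫ ≤ 3 * γ / 4 * ‖f' z - v‖ ^ 2 + 1 / (3 * γ) * ‖x - z‖ ^ 2 := by
    convert inner_le_mul_norm_sq_add (c := 3 * γ / 4) (by positivity) (f' z - v) (x - z) using 3
    ring
  have hstepsize : L / 2 * ‖x - z‖ ^ 2 ≤ 1 / (6 * γ) * ‖x - z‖ ^ 2 := by
    refine mul_le_mul_of_nonneg_right ?_ (sq_nonneg _)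
    rw [div_le_div_iff₀ two_pos (by positivity)]
    linarith
  have hsquares : 1 / (2 * γ) * (‖z + γ • r - s‖ ^ 2 - ‖x + γ • r - s‖ ^ 2)
      = γ⁻¹ * ⟪z - x, x - s⟫ + 1 / (2 * γ) * ‖x - z‖ ^ 2 + ⟪r, z - x⟫ := by
    have hz : z + γ • r - s = (x + γ • r - s) + (z - x) := by abel
    have hx : x + γ • r - s = γ • r + (x - s) := by abel
    rw [hz, norm_add_sq_real, norm_sub_rev x z, add_assoc, add_sub_cancel_left, hx,
      inner_add_left, real_inner_smul_left, real_inner_comm (z - x) (x - s)]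
    field_simp
    ring
  have hcoef : 1 / (2 * γ) * ‖x - z‖ ^ 2
      = 1 / (3 * γ) * ‖x - z‖ ^ 2 + 1 / (6 * γ) * ‖x - z‖ ^ 2 := by field_simp; ring
  have hGs := hG s hs
  have hHs := hH s (Set.mem_univ s)
  simp only [bregman, inner_sub_left, inner_sub_right, real_inner_smul_left] at *
  linarith

lemma norm_splitting_step_sub_sq_le (hγ : 0 < γ)
    (hG : 0 ≤ ⟪(γ⁻¹ • (z - x) - r - v) - (-rs - vs), x - s⟫) (hH : 0 ≤ ⟪r - rs, z - s⟫) :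
    ‖x + γ • r - (s + γ • rs)‖ ^ 2 ≤ ‖z + γ • r - (s + γ • rs)‖ ^ 2
      - 2 * γ * ⟪v - vs, z - s⟫ + γ ^ 2 * ‖v - vs‖ ^ 2 := by
  set p := (γ⁻¹ • (z - x) - r - v) - (-rs - vs) with hp
  set ρ := r - rs with hρ
  set δ := v - vs with hδ
  have hx : x - s = (z - s) - γ • (p + ρ + δ) := by
    have : p + ρ + δ = γ⁻¹ • (z - x) := by rw [hp, hρ, hδ]; abel
    rw [this, smul_inv_smul₀ hγ.ne']
    abel
  have hnew : x + γ • r - (s + γ • rs) = (z - s) - γ • (p + δ) := by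
    have : x + γ • r - (s + γ • rs) = (x - s) + γ • ρ := by rw [hρ, smul_sub]; abel
    rw [this, hx, smul_add, smul_add, smul_add]
    abel
  have hold : z + γ • r - (s + γ • rs) = (z - s) + γ • ρ := by rw [hρ, smul_sub]; abel
  rw [hx, inner_sub_right, real_inner_smul_right] at hG
  have hgap : ‖(z - s) + γ • ρ‖ ^ 2 - 2 * γ * ⟪δ, z - s⟫ + γ ^ 2 * ‖δ‖ ^ 2
      - ‖(z - s) - γ • (p + δ)‖ ^ 2
      = 2 * γ * (⟪p, z - s⟫ - γ * ⟪p, p + ρ + δ⟫) + 2 * γ * ⟪ρ, z - s⟫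
        + γ ^ 2 * ‖p + ρ‖ ^ 2 := by
    simp only [norm_add_sq_real, norm_sub_sq_real, norm_smul, inner_add_right,
      real_inner_smul_right, mul_pow, Real.norm_eq_abs, sq_abs,
      real_inner_self_eq_norm_sq, real_inner_comm (z - s)]
    ring
  have hnonneg : 0 ≤ 2 * γ * (⟪p, z - s⟫ - γ * ⟪p, p + ρ + δ⟫) + 2 * γ * ⟪ρ, z - s⟫
      + γ ^ 2 * ‖p + ρ‖ ^ 2 := by positivity
  rw [hnew, hold]
  linarith

/-- The coefficient `3 / 2` of the last iterate `y` is the one that the Lyapunov function of the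
iteration can absorb. -/
lemma norm_sub_sq_sub_add_mul_le {y₀ y ys : E} {C : ℝ} (hC : ‖ys - s‖ ≤ C) :
    ‖y₀ - s‖ ^ 2 - ‖y - s‖ ^ 2 + 2 * C * ‖y - y₀‖
      ≤ 7 / 2 * ‖y₀ - ys‖ ^ 2 + 3 / 2 * ‖y - ys‖ ^ 2 + 16 / 5 * C ^ 2 := by
  have hexpand : ‖y₀ - s‖ ^ 2 - ‖y - s‖ ^ 2
      = ‖y₀ - ys‖ ^ 2 - ‖y - ys‖ ^ 2 + 2 * ⟪y₀ - y, ys - s⟫ := by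
    have hsub (a : E) : a - s = (a - ys) + (ys - s) := by abel
    rw [hsub y₀, hsub y, norm_add_sq_real, norm_add_sq_real, ← sub_sub_sub_cancel_right y₀ y ys,
      inner_sub_left (y₀ - ys) (y - ys)]
    ring
  have hinner : ⟪y₀ - y, ys - s⟫ ≤ C * ‖y - y₀‖ := by
    rw [norm_sub_rev, mul_comm]
    exact (real_inner_le_norm _ _).trans (by gcongr)
  have htriangle : C * ‖y - y₀‖ ≤ C * (‖y₀ - ys‖ + ‖y - ys‖) := by
    have hC0 : 0 ≤ C := (norm_nonneg _).trans hC
    rw [add_comm ‖y₀ - ys‖, norm_sub_rev y₀]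
    gcongr
    exact norm_sub_le_norm_sub_add_norm_sub y ys y₀
  nlinarith [sq_nonneg (5 * ‖y₀ - ys‖ - 4 * C), sq_nonneg (5 * ‖y - ys‖ - 4 * C)]

end SplittingStep

end Convexity

section IndependentDraws

variable {S X : Type*}

/-- The state reached from `x₀` after `k` transitions along the draws `r 0, r 1, …`. -/
def orbit (step : S → X → X) (x₀ : X) (r : ℕ → S) : ℕ → X
  | 0 => x₀
  | k + 1 => step (r k) (orbit step x₀ r k)

lemma orbit_succ' (step : S → X → X) (x₀ : X) (r : ℕ → S) (k : ℕ) :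
    orbit step x₀ r (k + 1) = orbit step (step (r 0) x₀) (fun j => r (j + 1)) k := by
  induction k with
  | zero => rfl
  | succ k ih => exact congrArg (step (r (k + 1))) ih

variable {S : Type}

lemma extSeq_cons_zero [Inhabited S] {T : ℕ} (s : S) (v : Fin T → S) :
    extSeq (T + 1) (Fin.cons s v : Fin (T + 1) → S) 0 = s := rfl

lemma extSeq_cons_succ [Inhabited S] {T : ℕ} (s : S) (v : Fin T → S) (k : ℕ) :
    extSeq (T + 1) (Fin.cons s v : Fin (T + 1) → S) (k + 1) = extSeq T v k := by
  simp only [extSeq, add_lt_add_iff_right]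
  rfl

variable [Fintype S] {w : S → ℝ}

lemma prodW_nonneg (hw : ∀ s, 0 ≤ w s) (T : ℕ) (v : Fin T → S) : 0 ≤ prodW w T v :=
  prod_nonneg fun k _ => hw (v k)

lemma sum_prodW (hw : ∑ s, w s = 1) (T : ℕ) : ∑ v, prodW w T v = 1 := by
  simp only [prodW, ← Fintype.sum_pow, hw, one_pow]

lemma sum_prodW_succ_mul (T : ℕ) (F : (Fin (T + 1) → S) → ℝ) :
    ∑ v, prodW w (T + 1) v * F v
      = ∑ s, w s * ∑ v, prodW w T v * F (Fin.cons s v : Fin (T + 1) → S) := by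
  rw [← (Fin.consEquiv fun _ => S).sum_comp, Fintype.sum_prod_type]
  simp only [Fin.consEquiv_apply, prodW, Fin.prod_univ_succ, Fin.cons_zero, Fin.cons_succ,
    mul_assoc, mul_sum]
  rfl

lemma sum_prodW_mul_cost_add_potential_le [Inhabited S] (hw : ∀ s, 0 ≤ w s) (hw1 : ∑ s, w s = 1)
    {step : S → X → X} {c : S → X → ℝ} {Φ : X → ℝ}
    (hstep : ∀ x, ∑ s, w s * (c s x + Φ (step s x)) ≤ Φ x) (T : ℕ) (x₀ : X) :
    ∑ v, prodW w T v * (∑ k ∈ range T, c (extSeq T v k) (orbit step x₀ (extSeq T v) k)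
      + Φ (orbit step x₀ (extSeq T v) T)) ≤ Φ x₀ := by
  induction T generalizing x₀ with
  | zero =>
    simp only [prodW, orbit, univ_eq_empty, prod_empty, range_zero, sum_empty, zero_add, one_mul,
      univ_unique, sum_const, card_singleton, one_smul, le_refl]
  | succ T ih =>
    rw [sum_prodW_succ_mul]
    refine (sum_le_sum fun s _ => mul_le_mul_of_nonneg_left ?_ (hw s)).trans (hstep x₀)
    simp only [orbit_succ', sum_range_succ', extSeq_cons_zero, extSeq_cons_succ]
    calc _ = ∑ v, prodW w T v * c s x₀ + ∑ v, prodW w T v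
            * (∑ k ∈ range T, c (extSeq T v k) (orbit step (step s x₀) (extSeq T v) k)
              + Φ (orbit step (step s x₀) (extSeq T v) T)) := by
          rw [← sum_add_distrib]
          refine sum_congr rfl fun v _ => ?_
          rw [orbit]
          ring
      _ ≤ c s x₀ + Φ (step s x₀) := by
          rw [← sum_mul, sum_prodW hw1, one_mul]
          gcongr
          exact ih (step s x₀)

end IndependentDraws

section Sampling

variable {S : Type*} [Fintype S] {n : ℕ} {w : S → ℝ} {sel : S → Fin n}
  {upd : S → Finset (Fin n)} {q : ℝ}

/-- Under the weights `w`, the index `sel` is uniform on `Fin n` and every index belongs to `upd`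
with probability `q / n`; the joint law of `sel` and `upd` is arbitrary. -/
structure IsUniformSampling (w : S → ℝ) (sel : S → Fin n) (upd : S → Finset (Fin n)) (q : ℝ) :
    Prop where
  nonneg : ∀ s, 0 ≤ w s
  sum_eq_one : ∑ s, w s = 1
  sum_sel : ∀ i, ∑ s ∈ univ.filter (fun s => sel s = i), w s = 1 / n
  sum_upd : ∀ j, ∑ s ∈ univ.filter (fun s => j ∈ upd s), w s = q / n

namespace IsUniformSampling

lemma sum_mul_sel (h : IsUniformSampling w sel upd q) (F : Fin n → ℝ) :
    ∑ s, w s * F (sel s) = (n : ℝ)⁻¹ * ∑ i, F i := by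
  rw [← sum_fiberwise univ sel, mul_sum]
  refine sum_congr rfl fun i _ => ?_
  rw [sum_congr rfl fun s hs => by rw [(mem_filter.1 hs).2], ← sum_mul, h.sum_sel, one_div]

lemma sum_mul_upd (h : IsUniformSampling w sel upd q) (a b : Fin n → ℝ) :
    ∑ s, w s * ∑ j, (if j ∈ upd s then a j else b j)
      = q / n * ∑ j, a j + (1 - q / n) * ∑ j, b j := by
  have hsplit (j : Fin n) (s : S) : w s * (if j ∈ upd s then a j else b j)
      = (if j ∈ upd s then w s else 0) * (a j - b j) + w s * b j := by
    split_ifs <;> ring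
  simp only [mul_sum]
  rw [sum_comm, ← sum_add_distrib]
  refine sum_congr rfl fun j _ => ?_
  rw [sum_congr rfl fun s _ => hsplit j s, sum_add_distrib, ← sum_mul, ← sum_mul, ← sum_filter,
    h.sum_upd, h.sum_eq_one]
  ring

end IsUniformSampling

end Sampling

/-- The data of the VR-TOS iteration: step size, component gradients and proximal maps. -/
structure VRTOS (E : Type*) (n : ℕ) where
  γ : ℝ
  gradψ : Fin n → E → E
  gradω : E → E
  proxg : E → E
  proxh : E → E

namespace VRTOS

section Iteration

variable {E : Type*} [NormedAddCommGroup E] [InnerProductSpace ℝ E] {n : ℕ} (A : VRTOS E n)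

/-- The gradient of the smooth objective `f`. -/
def gradf : E → E := meanAdd A.gradψ A.gradω

/-- The search direction `v` at the state `σ = (y, α)` when the index `i` is sampled. -/
def direction (σ : E × (Fin n → E)) (i : Fin n) : E :=
  A.gradψ i (A.proxh σ.1) - σ.2 i + (n : ℝ)⁻¹ • ∑ j, σ.2 j + A.gradω (A.proxh σ.1)

/-- The iterate `x` produced at the state `σ = (y, α)` when the index `i` is sampled. -/
def primalPoint (σ : E × (Fin n → E)) (i : Fin n) : E :=
  A.proxg (2 • A.proxh σ.1 - σ.1 - A.γ • A.direction σ i)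

/-- One iteration on the state `σ = (y, α)`: the index `i` is sampled and the memory of the indices
in `U` is refreshed. -/
def step (i : Fin n) (U : Finset (Fin n)) (σ : E × (Fin n → E)) : E × (Fin n → E) :=
  (σ.1 + A.primalPoint σ i - A.proxh σ.1,
    fun j => if j ∈ U then A.gradψ j (A.proxh σ.1) else σ.2 j)

/-- `ys` is a fixed point of the operator `G_γ` of deterministic three-operator splitting. -/
def IsFixedPt (ys : E) : Prop :=
  ys - A.proxh ys + A.proxg (2 • A.proxh ys - ys - A.γ • A.gradf (A.proxh ys)) = ys

/-- The error with which the iteration at the state `σ` reduces the objective gap with respect to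
the reference point `s`, caused by the deviation of the sampled direction from the gradient. -/
def noise (f : E → ℝ) (s : E) (σ : E × (Fin n → E)) (i : Fin n) : ℝ :=
  ⟪A.gradf (A.proxh σ.1) - A.direction σ i, A.proxh σ.1 - s⟫ - bregman f A.gradf s (A.proxh σ.1)
    + 3 * A.γ / 4 * ‖A.gradf (A.proxh σ.1) - A.direction σ i‖ ^ 2

/-- The mean squared distance of the memory `α` from the component gradients at `s`, normalized as
`H₀` in the rate; `L` is the smoothness constant of `f`. -/
def memoryError (L : ℝ) (s : E) (α : Fin n → E) : ℝ :=
  1 / (2 * n * L) * ∑ i, ‖α i - A.gradψ i s‖ ^ 2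

/-- The Lyapunov function of the iteration with memory refreshed at rate `q / n`, for the fixed
point `ys`. -/
def lyapunov (L q : ℝ) (ys : E) (σ : E × (Fin n → E)) : ℝ :=
  1 / (2 * A.γ) * ‖σ.1 - ys‖ ^ 2 + 4 / 3 * (n / q) * A.memoryError L (A.proxh ys) σ.2

/-- The standing assumptions on the smooth part of the problem and on the step size. -/
structure IsAdmissible [CompleteSpace E] (ψ : Fin n → E → ℝ) (ω : E → ℝ) (Lψ Lω : ℝ) : Prop where
  n_pos : 0 < n
  smooth_ψ : ∀ i, IsSmoothConvex (ψ i) (A.gradψ i) Lψ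
  smooth_ω : IsSmoothConvex ω A.gradω Lω
  L_pos : 0 < Lψ + Lω
  γ_pos : 0 < A.γ
  three_mul_γ_mul_L_le_one : 3 * A.γ * (Lψ + Lω) ≤ 1

variable {A}

lemma gradf_sub_direction (σ : E × (Fin n → E)) (i : Fin n) :
    A.gradf (A.proxh σ.1) - A.direction σ i
      = (n : ℝ)⁻¹ • ∑ j, (A.gradψ j (A.proxh σ.1) - σ.2 j) - (A.gradψ i (A.proxh σ.1) - σ.2 i) := by
  rw [gradf, meanAdd, direction, sum_sub_distrib, smul_sub]
  abel

lemma sum_gradf_sub_direction (hn : 0 < n) (σ : E × (Fin n → E)) :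
    ∑ i, (A.gradf (A.proxh σ.1) - A.direction σ i) = 0 := by
  have hn' : (n : ℝ) ≠ 0 := by positivity
  simp only [gradf_sub_direction, sum_sub_distrib, sum_const, card_univ, Fintype.card_fin,
    ← Nat.cast_smul_eq_nsmul ℝ n, smul_inv_smul₀ hn', sub_self]

lemma direction_sub_gradf (σ : E × (Fin n → E)) (s : E) (i : Fin n) :
    A.direction σ i - A.gradf s
      = (A.gradψ i (A.proxh σ.1) + A.gradω (A.proxh σ.1) - (A.gradψ i s + A.gradω s))
        - ((σ.2 i - A.gradψ i s) - (n : ℝ)⁻¹ • ∑ j, (σ.2 j - A.gradψ j s)) := by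
  rw [gradf, meanAdd, direction, sum_sub_distrib, smul_sub]
  abel

lemma sum_mul_memoryError_step {S : Type*} [Fintype S] {w : S → ℝ} {sel : S → Fin n}
    {upd : S → Finset (Fin n)} {q : ℝ} (hS : IsUniformSampling w sel upd q) (L : ℝ) (s : E)
    (σ : E × (Fin n → E)) :
    ∑ d, w d * A.memoryError L s (A.step (sel d) (upd d) σ).2
      = q / n * A.memoryError L s (fun i => A.gradψ i (A.proxh σ.1))
        + (1 - q / n) * A.memoryError L s σ.2 := by
  have hsum := hS.sum_mul_upd (fun i => ‖A.gradψ i (A.proxh σ.1) - A.gradψ i s‖ ^ 2)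
    (fun i => ‖σ.2 i - A.gradψ i s‖ ^ 2)
  have hstep (d : S) (j : Fin n) : ‖(A.step (sel d) (upd d) σ).2 j - A.gradψ j s‖ ^ 2
      = if j ∈ upd d then ‖A.gradψ j (A.proxh σ.1) - A.gradψ j s‖ ^ 2
        else ‖σ.2 j - A.gradψ j s‖ ^ 2 := by
    simp only [step]
    split_ifs <;> rfl
  simp only [memoryError, hstep, mul_left_comm (w _), ← mul_sum] at hsum ⊢
  rw [hsum]
  ring

namespace IsFixedPt

variable {G : E → ℝ} {D : Set E} {ys : E}

lemma proxg_eq (hys : A.IsFixedPt ys) :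
    A.proxg (2 • A.proxh ys - ys - A.γ • A.gradf (A.proxh ys)) = A.proxh ys := by
  rw [IsFixedPt, sub_add, sub_eq_self, sub_eq_zero] at hys
  exact hys.symm

lemma proxh_mem (hys : A.IsFixedPt ys) (hG : IsProxMapOn A.γ G D A.proxg) : A.proxh ys ∈ D :=
  hys.proxg_eq ▸ hG.mem _

lemma subgradient_g (hys : A.IsFixedPt ys) (hγ : A.γ ≠ 0) (hG : IsProxMapOn A.γ G D A.proxg) :
    IsSubgradientOn G D (-(A.γ⁻¹ • (ys - A.proxh ys)) - A.gradf (A.proxh ys)) (A.proxh ys) := by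
  have hsub := hG.subgradient_reflected hγ ys (A.proxh ys) (A.gradf (A.proxh ys))
  rwa [hys.proxg_eq, sub_self, smul_zero, zero_sub] at hsub

end IsFixedPt

namespace IsAdmissible

variable [CompleteSpace E] {ψ : Fin n → E → ℝ} {ω : E → ℝ} {Lψ Lω : ℝ} {s : E}

lemma smooth_f (h : A.IsAdmissible ψ ω Lψ Lω) :
    IsSmoothConvex (meanAdd ψ ω) A.gradf (Lψ + Lω) :=
  IsSmoothConvex.meanAdd h.n_pos h.smooth_ψ h.smooth_ω

lemma memoryError_nonneg (h : A.IsAdmissible ψ ω Lψ Lω) (s : E) (α : Fin n → E) :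
    0 ≤ A.memoryError (Lψ + Lω) s α := by
  have := h.L_pos
  unfold memoryError
  positivity

lemma sum_norm_sub_gradψ_sq (h : A.IsAdmissible ψ ω Lψ Lω) (s : E) (α : Fin n → E) :
    ∑ i, ‖α i - A.gradψ i s‖ ^ 2 = 2 * (Lψ + Lω) * n * A.memoryError (Lψ + Lω) s α := by
  have hn : (n : ℝ) ≠ 0 := Nat.cast_ne_zero.2 h.n_pos.ne'
  have hL := h.L_pos.ne'
  rw [memoryError]
  field_simp

lemma sum_norm_gradψ_sub_sq_le (h : A.IsAdmissible ψ ω Lψ Lω) (x y : E) :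
    ∑ i, ‖A.gradψ i x - A.gradψ i y‖ ^ 2
      ≤ 2 * (Lψ + Lω) * n * bregman (meanAdd ψ ω) A.gradf x y :=
  sum_norm_sub_sq_le_bregman_meanAdd h.n_pos h.L_pos
    (fun i => (h.smooth_ψ i).weaken h.smooth_ω) (h.smooth_ω.bregman_nonneg x y)

lemma memoryError_gradψ_le (h : A.IsAdmissible ψ ω Lψ Lω) (x y : E) :
    A.memoryError (Lψ + Lω) y (fun i => A.gradψ i x) ≤ bregman (meanAdd ψ ω) A.gradf x y := by
  have hn : (0 : ℝ) < n := Nat.cast_pos.2 h.n_pos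
  have hle := h.sum_norm_gradψ_sub_sq_le x y
  rw [h.sum_norm_sub_gradψ_sq y (fun i => A.gradψ i x)] at hle
  have := h.L_pos
  exact le_of_mul_le_mul_left hle (by positivity)

lemma memoryError_gradψ_le_symm (h : A.IsAdmissible ψ ω Lψ Lω) (x y : E) :
    A.memoryError (Lψ + Lω) y (fun i => A.gradψ i x) ≤ bregman (meanAdd ψ ω) A.gradf y x := by
  simpa only [memoryError, norm_sub_rev] using h.memoryError_gradψ_le y x

lemma sum_norm_gradf_sub_direction_sq_le (h : A.IsAdmissible ψ ω Lψ Lω) (s : E)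
    (σ : E × (Fin n → E)) :
    ∑ i, ‖A.gradf (A.proxh σ.1) - A.direction σ i‖ ^ 2 ≤ 4 * (Lψ + Lω) * n
      * (bregman (meanAdd ψ ω) A.gradf s (A.proxh σ.1) + A.memoryError (Lψ + Lω) s σ.2) := by
  set z := A.proxh σ.1
  have hvariance := sum_norm_sub_mean_sq_le fun i => A.gradψ i z - σ.2 i
  have hsplit (i : Fin n) : ‖A.gradψ i z - σ.2 i‖ ^ 2
      ≤ 2 * ‖A.gradψ i s - A.gradψ i z‖ ^ 2 + 2 * ‖σ.2 i - A.gradψ i s‖ ^ 2 := by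
    have := norm_sub_sq_le_two_mul (A.gradψ i z - A.gradψ i s) (σ.2 i - A.gradψ i s)
    rwa [sub_sub_sub_cancel_right, norm_sub_rev (A.gradψ i z) (A.gradψ i s)] at this
  calc ∑ i, ‖A.gradf z - A.direction σ i‖ ^ 2
      ≤ ∑ i, ‖A.gradψ i z - σ.2 i‖ ^ 2 := by
        simpa only [z, gradf_sub_direction, norm_sub_rev, Fintype.card_fin] using hvariance
    _ ≤ 2 * ∑ i, ‖A.gradψ i s - A.gradψ i z‖ ^ 2 + 2 * ∑ i, ‖σ.2 i - A.gradψ i s‖ ^ 2 := by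
        rw [mul_sum, mul_sum, ← sum_add_distrib]
        exact sum_le_sum fun i _ => hsplit i
    _ ≤ _ := by
        rw [h.sum_norm_sub_gradψ_sq s σ.2]
        linarith [h.sum_norm_gradψ_sub_sq_le s z]

lemma sum_norm_direction_sub_gradf_sq_le (h : A.IsAdmissible ψ ω Lψ Lω) (s : E)
    (σ : E × (Fin n → E)) :
    ∑ i, ‖A.direction σ i - A.gradf s‖ ^ 2 ≤ 4 * (Lψ + Lω) * n
      * (bregman (meanAdd ψ ω) A.gradf (A.proxh σ.1) s + A.memoryError (Lψ + Lω) s σ.2) := by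
  set z := A.proxh σ.1
  have hvariance := sum_norm_sub_mean_sq_le fun i => σ.2 i - A.gradψ i s
  have hgrad := sum_norm_add_sub_sq_le_bregman_meanAdd h.n_pos h.L_pos h.smooth_ψ h.smooth_ω z s
  rw [Fintype.card_fin, h.sum_norm_sub_gradψ_sq] at hvariance
  calc ∑ i, ‖A.direction σ i - A.gradf s‖ ^ 2
      ≤ 2 * ∑ i, ‖A.gradψ i z + A.gradω z - (A.gradψ i s + A.gradω s)‖ ^ 2
        + 2 * ∑ i, ‖(σ.2 i - A.gradψ i s) - (n : ℝ)⁻¹ • ∑ j, (σ.2 j - A.gradψ j s)‖ ^ 2 := by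
        rw [mul_sum, mul_sum, ← sum_add_distrib]
        refine sum_le_sum fun i _ => ?_
        rw [direction_sub_gradf]
        exact norm_sub_sq_le_two_mul _ _
    _ ≤ _ := by
        rw [gradf]
        linarith

lemma sum_noise_le (h : A.IsAdmissible ψ ω Lψ Lω) (s : E) (σ : E × (Fin n → E)) :
    ∑ i, A.noise (meanAdd ψ ω) s σ i ≤ n * A.memoryError (Lψ + Lω) s σ.2 := by
  have hγ := h.γ_pos
  have hmean := congrArg (fun e => ⟪e, A.proxh σ.1 - s⟫)
    (sum_gradf_sub_direction (A := A) h.n_pos σ)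
  have hvar := mul_le_mul_of_nonneg_left (h.sum_norm_gradf_sub_direction_sq_le s σ)
    (by positivity : 0 ≤ 3 * A.γ / 4)
  have hbreg := h.smooth_f.bregman_nonneg s (A.proxh σ.1)
  have hstep := mul_le_mul_of_nonneg_right h.three_mul_γ_mul_L_le_one
    (mul_nonneg n.cast_nonneg (add_nonneg hbreg (h.memoryError_nonneg s σ.2)))
  simp only [sum_inner, inner_zero_left] at hmean
  simp only [noise, sum_add_distrib, sum_sub_distrib, hmean, sum_const, card_univ,
    Fintype.card_fin, nsmul_eq_mul, ← mul_sum]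
  linarith

variable {G H : E → ℝ} {D : Set E} {ys : E}

lemma norm_step_sub_sq_le (h : A.IsAdmissible ψ ω Lψ Lω) (hG : IsProxMapOn A.γ G D A.proxg)
    (hH : IsProxMapOn A.γ H Set.univ A.proxh) (hys : A.IsFixedPt ys) (σ : E × (Fin n → E))
    (i : Fin n) :
    ‖σ.1 + A.primalPoint σ i - A.proxh σ.1 - ys‖ ^ 2 ≤ ‖σ.1 - ys‖ ^ 2
      - 2 * A.γ * ⟪A.direction σ i - A.gradf (A.proxh ys), A.proxh σ.1 - A.proxh ys⟫
      + A.γ ^ 2 * ‖A.direction σ i - A.gradf (A.proxh ys)‖ ^ 2 := by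
  have hγ := h.γ_pos
  have hGx := hG.subgradient_reflected hγ.ne' σ.1 (A.proxh σ.1) (A.direction σ i)
  have hGs := hys.subgradient_g hγ.ne' hG
  have hstep := norm_splitting_step_sub_sq_le hγ
    (hGx.inner_sub_nonneg hGs (hG.mem _) (hys.proxh_mem hG))
    ((hH.subgradient σ.1).inner_sub_nonneg (hH.subgradient ys) (hH.mem _) (hH.mem _))
  rw [smul_inv_smul₀ hγ.ne', smul_inv_smul₀ hγ.ne', add_sub_cancel, add_sub_cancel] at hstep
  convert hstep using 3
  rw [primalPoint]
  abel

lemma sum_norm_step_sub_sq_le (h : A.IsAdmissible ψ ω Lψ Lω) (hG : IsProxMapOn A.γ G D A.proxg)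
    (hH : IsProxMapOn A.γ H Set.univ A.proxh) (hys : A.IsFixedPt ys) (σ : E × (Fin n → E)) :
    ∑ i, ‖σ.1 + A.primalPoint σ i - A.proxh σ.1 - ys‖ ^ 2
      ≤ n * (‖σ.1 - ys‖ ^ 2 + 2 * A.γ * (2 / 3 * A.memoryError (Lψ + Lω) (A.proxh ys) σ.2
        - bregman (meanAdd ψ ω) A.gradf (A.proxh ys) (A.proxh σ.1)
        - 1 / 3 * bregman (meanAdd ψ ω) A.gradf (A.proxh σ.1) (A.proxh ys))) := by
  set z := A.proxh σ.1
  set s := A.proxh ys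
  have hmean : ∑ i, ⟪A.direction σ i - A.gradf s, z - s⟫
      = n * (bregman (meanAdd ψ ω) A.gradf s z + bregman (meanAdd ψ ω) A.gradf z s) := by
    have hsum := congrArg (fun e => ⟪e, z - s⟫) (sum_gradf_sub_direction (A := A) h.n_pos σ)
    simp only [sum_inner, inner_zero_left, inner_sub_left, sum_sub_distrib, sum_const, card_univ,
      Fintype.card_fin, ← Nat.cast_smul_eq_nsmul ℝ n,
      real_inner_smul_left] at hsum ⊢
    simp only [bregman, ← neg_sub z s, inner_neg_right]
    linear_combination -hsum
  have hvar := mul_le_mul_of_nonneg_left (h.sum_norm_direction_sub_gradf_sq_le s σ)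
    (sq_nonneg A.γ)
  have hstep := mul_le_mul_of_nonneg_right h.three_mul_γ_mul_L_le_one
    (mul_nonneg (mul_nonneg n.cast_nonneg h.γ_pos.le)
      (add_nonneg (h.smooth_f.bregman_nonneg z s) (h.memoryError_nonneg s σ.2)))
  calc ∑ i, ‖σ.1 + A.primalPoint σ i - z - ys‖ ^ 2
      ≤ ∑ i, (‖σ.1 - ys‖ ^ 2 - 2 * A.γ * ⟪A.direction σ i - A.gradf s, z - s⟫
          + A.γ ^ 2 * ‖A.direction σ i - A.gradf s‖ ^ 2) :=
        sum_le_sum fun i _ => h.norm_step_sub_sq_le hG hH hys σ i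
    _ = n * ‖σ.1 - ys‖ ^ 2 - 2 * A.γ * ∑ i, ⟪A.direction σ i - A.gradf s, z - s⟫
          + A.γ ^ 2 * ∑ i, ‖A.direction σ i - A.gradf s‖ ^ 2 := by
        simp only [sum_add_distrib, sum_sub_distrib, sum_const, card_univ, Fintype.card_fin,
          nsmul_eq_mul, ← mul_sum]
    _ ≤ _ := by
        rw [hmean]
        linarith

variable {S : Type*} [Fintype S] {w : S → ℝ} {sel : S → Fin n} {upd : S → Finset (Fin n)} {q : ℝ}

lemma sum_mul_lyapunov_step_le (h : A.IsAdmissible ψ ω Lψ Lω)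
    (hG : IsProxMapOn A.γ G D A.proxg) (hH : IsProxMapOn A.γ H Set.univ A.proxh)
    (hys : A.IsFixedPt ys) (hS : IsUniformSampling w sel upd q) (hq : 0 < q)
    (σ : E × (Fin n → E)) :
    ∑ d, w d * A.lyapunov (Lψ + Lω) q ys (A.step (sel d) (upd d) σ)
      ≤ A.lyapunov (Lψ + Lω) q ys σ - 2 / 3 * A.memoryError (Lψ + Lω) (A.proxh ys) σ.2 := by
  have hn : (0 : ℝ) < n := Nat.cast_pos.2 h.n_pos
  have hγ := h.γ_pos
  set s := A.proxh ys
  set z := A.proxh σ.1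
  set M := A.memoryError (Lψ + Lω) s σ.2
  set K := A.memoryError (Lψ + Lω) s (fun i => A.gradψ i z)
  set a := bregman (meanAdd ψ ω) A.gradf s z
  set b := bregman (meanAdd ψ ω) A.gradf z s
  have hdist : ∑ d, w d * ‖(A.step (sel d) (upd d) σ).1 - ys‖ ^ 2
      ≤ ‖σ.1 - ys‖ ^ 2 + 2 * A.γ * (2 / 3 * M - a - 1 / 3 * b) := by
    have hsel := hS.sum_mul_sel fun i => ‖σ.1 + A.primalPoint σ i - z - ys‖ ^ 2
    exact hsel.trans_le ((inv_mul_le_iff₀ hn).2 (h.sum_norm_step_sub_sq_le hG hH hys σ))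
  have hrefresh : K ≤ 3 / 4 * a + 1 / 4 * b := by
    linarith [h.memoryError_gradψ_le z s, h.memoryError_gradψ_le_symm z s]
  calc ∑ d, w d * A.lyapunov (Lψ + Lω) q ys (A.step (sel d) (upd d) σ)
      = 1 / (2 * A.γ) * ∑ d, w d * ‖(A.step (sel d) (upd d) σ).1 - ys‖ ^ 2
        + 4 / 3 * (n / q) * (q / n * K + (1 - q / n) * M) := by
        simp only [K, M, s, z, ← sum_mul_memoryError_step hS, lyapunov, mul_add, sum_add_distrib,
          mul_sum, mul_left_comm (w _)]
    _ ≤ 1 / (2 * A.γ) * (‖σ.1 - ys‖ ^ 2 + 2 * A.γ * (2 / 3 * M - a - 1 / 3 * b))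
        + 4 / 3 * (n / q) * (q / n * K + (1 - q / n) * M) := by gcongr
    _ = A.lyapunov (Lψ + Lω) q ys σ - 2 / 3 * M + (4 / 3 * K - a - 1 / 3 * b) := by
        simp only [lyapunov]
        field_simp
        ring
    _ ≤ _ := by linarith

lemma sum_mul_noise_add_lyapunov_step_le (h : A.IsAdmissible ψ ω Lψ Lω)
    (hG : IsProxMapOn A.γ G D A.proxg) (hH : IsProxMapOn A.γ H Set.univ A.proxh)
    (hys : A.IsFixedPt ys) (hS : IsUniformSampling w sel upd q) (hq : 0 < q)
    (σ : E × (Fin n → E)) :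
    ∑ d, w d * (A.noise (meanAdd ψ ω) (A.proxh ys) σ (sel d)
        + 3 / 2 * A.lyapunov (Lψ + Lω) q ys (A.step (sel d) (upd d) σ))
      ≤ 3 / 2 * A.lyapunov (Lψ + Lω) q ys σ := by
  have hnoise : ∑ d, w d * A.noise (meanAdd ψ ω) (A.proxh ys) σ (sel d)
      ≤ A.memoryError (Lψ + Lω) (A.proxh ys) σ.2 := by
    rw [hS.sum_mul_sel, inv_mul_le_iff₀ (Nat.cast_pos.2 h.n_pos)]
    exact h.sum_noise_le _ σ
  have hlyapunov := h.sum_mul_lyapunov_step_le hG hH hys hS hq σ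
  simp only [mul_add, sum_add_distrib, mul_left_comm (w _), ← mul_sum]
  linarith

end IsAdmissible

end Iteration

end VRTOS

section Averages

variable {E : Type*}

lemma mul_map_average_le [AddCommGroup E] [Module ℝ E] {φ : E → ℝ} {D : Set E}
    (hφ : ConvexOn ℝ D φ) {T : ℕ} (hT : 0 < T) {x : ℕ → E} (hx : ∀ k, x k ∈ D) :
    T * φ ((T : ℝ)⁻¹ • ∑ k ∈ range T, x k) ≤ ∑ k ∈ range T, φ (x k) := by
  have hT' : (0 : ℝ) < T := Nat.cast_pos.2 hT
  have hjensen := hφ.map_sum_le (t := range T) (w := fun _ => (T : ℝ)⁻¹) (p := x)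
    (fun _ _ => by positivity)
    (by rw [sum_const, card_range, nsmul_eq_mul, mul_inv_cancel₀ hT'.ne']) (fun k _ => hx k)
  rw [← smul_sum] at hjensen
  simpa only [smul_eq_mul, ← mul_sum, ← inv_mul_le_iff₀ hT', le_inv_mul_iff₀ hT'] using hjensen

lemma mul_objective_average_le [NormedAddCommGroup E] [NormedSpace ℝ E] {f G H : E → ℝ}
    {D : Set E} {β : ℝ} (hf : ConvexOn ℝ Set.univ f) (hG : ConvexOn ℝ D G)
    (hH : ConvexOn ℝ Set.univ H) (hlip : ∀ x y, H x ≤ H y + β * ‖x - y‖)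
    {T : ℕ} (hT : 0 < T) {x z : ℕ → E} (hx : ∀ k, x k ∈ D) :
    T * (f ((T : ℝ)⁻¹ • ∑ k ∈ range T, x k) + G ((T : ℝ)⁻¹ • ∑ k ∈ range T, x k)
        + H ((T : ℝ)⁻¹ • ∑ k ∈ range T, x k))
      ≤ ∑ k ∈ range T, (f (x k) + G (x k) + H (z k)) + β * ‖∑ k ∈ range T, (x k - z k)‖ := by
  have hT' : (0 : ℝ) < T := Nat.cast_pos.2 hT
  have hHx := mul_le_mul_of_nonneg_left
    (hlip ((T : ℝ)⁻¹ • ∑ k ∈ range T, x k) ((T : ℝ)⁻¹ • ∑ k ∈ range T, z k)) hT'.le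
  rw [← smul_sub, ← sum_sub_distrib, norm_smul, Real.norm_of_nonneg (inv_nonneg.2 hT'.le),
    mul_add, mul_left_comm (T : ℝ) β, mul_inv_cancel_left₀ hT'.ne'] at hHx
  simp only [sum_add_distrib]
  linarith [mul_map_average_le hf hT fun k => Set.mem_univ (x k), mul_map_average_le hG hT hx,
    mul_map_average_le hH hT fun k => Set.mem_univ (z k)]

end Averages

namespace VRTOS

section Trajectory

variable {E : Type*} [NormedAddCommGroup E] [InnerProductSpace ℝ E] {n : ℕ} {S : Type*}

/-- The states visited when the draws are `r 0, r 1, …`, started from `σ₀`. -/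
def trajectory (A : VRTOS E n) (sel : S → Fin n) (upd : S → Finset (Fin n))
    (σ₀ : E × (Fin n → E)) (r : ℕ → S) : ℕ → E × (Fin n → E) :=
  orbit (fun d => A.step (sel d) (upd d)) σ₀ r

/-- The average of the first `T` iterates `x`. -/
def primalMean (A : VRTOS E n) (sel : S → Fin n) (upd : S → Finset (Fin n))
    (σ₀ : E × (Fin n → E)) (T : ℕ) (r : ℕ → S) : E :=
  (T : ℝ)⁻¹ • ∑ k ∈ range T, A.primalPoint (A.trajectory sel upd σ₀ r k) (sel (r k))

lemma trajectory_eq_of_step {A : VRTOS E n} {sel : S → Fin n} {upd : S → Finset (Fin n)}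
    {r : ℕ → S} {τ : ℕ → E × (Fin n → E)}
    (hτ : ∀ k, τ (k + 1) = A.step (sel (r k)) (upd (r k)) (τ k)) (k : ℕ) :
    A.trajectory sel upd (τ 0) r k = τ k := by
  induction k with
  | zero => rfl
  | succ k ih => rw [hτ k, ← ih, trajectory, orbit]

lemma sum_primalPoint_sub (A : VRTOS E n) (sel : S → Fin n) (upd : S → Finset (Fin n))
    (σ₀ : E × (Fin n → E)) (r : ℕ → S) (T : ℕ) :
    ∑ k ∈ range T, (A.primalPoint (A.trajectory sel upd σ₀ r k) (sel (r k))
        - A.proxh (A.trajectory sel upd σ₀ r k).1)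
      = (A.trajectory sel upd σ₀ r T).1 - σ₀.1 := by
  refine (sum_congr rfl fun k _ => ?_).trans
    (sum_range_sub (fun k => (A.trajectory sel upd σ₀ r k).1) T)
  simp only [trajectory, orbit, step]
  abel

lemma primalMean_mem {A : VRTOS E n} {D : Set E} (hD : Convex ℝ D) (hA : ∀ a, A.proxg a ∈ D)
    (sel : S → Fin n) (upd : S → Finset (Fin n)) (σ₀ : E × (Fin n → E)) {T : ℕ} (hT : 0 < T)
    (r : ℕ → S) : A.primalMean sel upd σ₀ T r ∈ D := by
  rw [primalMean, smul_sum]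
  refine hD.sum_mem (fun _ _ => by positivity) ?_ fun k _ => hA _
  rw [sum_const, card_range, nsmul_eq_mul, mul_inv_cancel₀ (Nat.cast_ne_zero.2 hT.ne')]

variable [CompleteSpace E] {A : VRTOS E n} {ψ : Fin n → E → ℝ} {ω : E → ℝ} {Lψ Lω β : ℝ}
  {G H : E → ℝ} {D : Set E} {s ys : E}

namespace IsAdmissible

lemma objective_gap_step_le (h : A.IsAdmissible ψ ω Lψ Lω) (hG : IsProxMapOn A.γ G D A.proxg)
    (hH : IsProxMapOn A.γ H Set.univ A.proxh) (hs : s ∈ D) (i : Fin n) (U : Finset (Fin n))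
    (σ : E × (Fin n → E)) :
    meanAdd ψ ω (A.primalPoint σ i) + G (A.primalPoint σ i) + H (A.proxh σ.1)
        - (meanAdd ψ ω s + G s + H s)
      ≤ 1 / (2 * A.γ) * (‖σ.1 - s‖ ^ 2 - ‖(A.step i U σ).1 - s‖ ^ 2)
        + A.noise (meanAdd ψ ω) s σ i := by
  have hgap := objective_gap_le h.γ_pos h.three_mul_γ_mul_L_le_one (h.smooth_f.bregman_le _ _)
    (hG.subgradient_reflected h.γ_pos.ne' σ.1 (A.proxh σ.1) (A.direction σ i))
    (hH.subgradient σ.1) hs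
  have hnew : (A.step i U σ).1 = A.primalPoint σ i + (σ.1 - A.proxh σ.1) := by
    simp only [step]
    abel
  rw [smul_inv_smul₀ h.γ_pos.ne', add_sub_cancel] at hgap
  rw [hnew]
  exact hgap

lemma objective_add_bregman_le (h : A.IsAdmissible ψ ω Lψ Lω) (hG : IsProxMapOn A.γ G D A.proxg)
    (hH : IsProxMapOn A.γ H Set.univ A.proxh) (hys : A.IsFixedPt ys) {x : E} (hx : x ∈ D) :
    meanAdd ψ ω (A.proxh ys) + G (A.proxh ys) + H (A.proxh ys)
        + bregman (meanAdd ψ ω) A.gradf x (A.proxh ys)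
      ≤ meanAdd ψ ω x + G x + H x := by
  have hGx := hys.subgradient_g h.γ_pos.ne' hG x hx
  have hHx := hH.subgradient ys x (Set.mem_univ x)
  rw [inner_sub_left, inner_neg_left] at hGx
  rw [bregman]
  linarith

lemma gradψ_eq_of_objective_le (h : A.IsAdmissible ψ ω Lψ Lω) (hG : IsProxMapOn A.γ G D A.proxg)
    (hH : IsProxMapOn A.γ H Set.univ A.proxh) (hys : A.IsFixedPt ys) {x : E} (hx : x ∈ D)
    (hle : meanAdd ψ ω x + G x + H x
      ≤ meanAdd ψ ω (A.proxh ys) + G (A.proxh ys) + H (A.proxh ys)) (i : Fin n) :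
    A.gradψ i x = A.gradψ i (A.proxh ys) := by
  have hbregman : bregman (meanAdd ψ ω) A.gradf x (A.proxh ys) ≤ 0 := by
    linarith [h.objective_add_bregman_le hG hH hys hx]
  have hL := h.L_pos
  have hsum : ∑ i, ‖A.gradψ i x - A.gradψ i (A.proxh ys)‖ ^ 2 ≤ 0 :=
    (h.sum_norm_gradψ_sub_sq_le x _).trans
      (mul_nonpos_of_nonneg_of_nonpos (by positivity) hbregman)
  have hterm := (single_le_sum (fun j _ => sq_nonneg ‖A.gradψ j x - A.gradψ j (A.proxh ys)‖)
    (mem_univ i)).trans hsum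
  rw [← sub_eq_zero, ← norm_eq_zero, ← sq_eq_zero_iff]
  exact hterm.antisymm (sq_nonneg _)

lemma sum_objective_gap_le (h : A.IsAdmissible ψ ω Lψ Lω) (hG : IsProxMapOn A.γ G D A.proxg)
    (hH : IsProxMapOn A.γ H Set.univ A.proxh) (hs : s ∈ D) (sel : S → Fin n)
    (upd : S → Finset (Fin n)) (σ₀ : E × (Fin n → E)) (r : ℕ → S) (T : ℕ) :
    ∑ k ∈ range T, (meanAdd ψ ω (A.primalPoint (A.trajectory sel upd σ₀ r k) (sel (r k)))
        + G (A.primalPoint (A.trajectory sel upd σ₀ r k) (sel (r k)))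
        + H (A.proxh (A.trajectory sel upd σ₀ r k).1))
      ≤ T * (meanAdd ψ ω s + G s + H s)
        + 1 / (2 * A.γ) * (‖σ₀.1 - s‖ ^ 2 - ‖(A.trajectory sel upd σ₀ r T).1 - s‖ ^ 2)
        + ∑ k ∈ range T, A.noise (meanAdd ψ ω) s (A.trajectory sel upd σ₀ r k) (sel (r k)) := by
  set τ := A.trajectory sel upd σ₀ r
  have htelescope : ‖σ₀.1 - s‖ ^ 2 - ‖(τ T).1 - s‖ ^ 2
      = ∑ k ∈ range T, (‖(τ k).1 - s‖ ^ 2 - ‖(τ (k + 1)).1 - s‖ ^ 2) :=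
    (sum_range_sub' (fun k => ‖(τ k).1 - s‖ ^ 2) T).symm
  have hconst : T * (meanAdd ψ ω s + G s + H s)
      = ∑ _k ∈ range T, (meanAdd ψ ω s + G s + H s) := by
    rw [sum_const, card_range, nsmul_eq_mul]
  rw [htelescope, hconst, mul_sum, ← sum_add_distrib, ← sum_add_distrib]
  refine sum_le_sum fun k _ => ?_
  have hgap := h.objective_gap_step_le hG hH hs (sel (r k)) (upd (r k)) (τ k)
  rw [sub_le_iff_le_add', ← add_assoc] at hgap
  exact hgap

lemma mul_objective_gap_primalMean_le (h : A.IsAdmissible ψ ω Lψ Lω)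
    (hG : IsProxMapOn A.γ G D A.proxg) (hH : IsProxMapOn A.γ H Set.univ A.proxh)
    (hGconv : ConvexOn ℝ D G) (hHconv : ConvexOn ℝ Set.univ H) (hβ : 0 ≤ β)
    (hlip : ∀ x y, H x ≤ H y + β * ‖x - y‖) (hys : A.IsFixedPt ys) {q : ℝ} (hq : 0 ≤ q)
    (sel : S → Fin n) (upd : S → Finset (Fin n)) (σ₀ : E × (Fin n → E)) {T : ℕ} (hT : 0 < T)
    (r : ℕ → S) :
    T * (meanAdd ψ ω (A.primalMean sel upd σ₀ T r) + G (A.primalMean sel upd σ₀ T r)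
        + H (A.primalMean sel upd σ₀ T r)
        - (meanAdd ψ ω (A.proxh ys) + G (A.proxh ys) + H (A.proxh ys)))
      ≤ ∑ k ∈ range T,
          A.noise (meanAdd ψ ω) (A.proxh ys) (A.trajectory sel upd σ₀ r k) (sel (r k))
        + 3 / 2 * A.lyapunov (Lψ + Lω) q ys (A.trajectory sel upd σ₀ r T)
        + (7 / (4 * A.γ) * ‖σ₀.1 - ys‖ ^ 2 + 8 / 5 * A.γ * β ^ 2) := by
  have hγ := h.γ_pos
  set s := A.proxh ys
  set τ := A.trajectory sel upd σ₀ r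
  have hmean := mul_objective_average_le h.smooth_f.convexOn hGconv hHconv hlip hT
    (x := fun k => A.primalPoint (τ k) (sel (r k))) (z := fun k => A.proxh (τ k).1)
    fun k => hG.mem _
  rw [sum_primalPoint_sub] at hmean
  have hsum := h.sum_objective_gap_le hG hH (hys.proxh_mem hG) sel upd σ₀ r T
  have hnorm : ‖ys - s‖ ≤ A.γ * β := by
    have := (hH.subgradient ys).norm_le hβ hlip
    rwa [norm_smul, norm_inv, Real.norm_of_nonneg hγ.le, inv_mul_le_iff₀ hγ] at this
  have hdist := mul_le_mul_of_nonneg_left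
    (norm_sub_sq_sub_add_mul_le (y₀ := σ₀.1) (y := (τ T).1) hnorm)
    (by positivity : 0 ≤ 1 / (2 * A.γ))
  have hmemory : 0 ≤ n / q * A.memoryError (Lψ + Lω) s (τ T).2 :=
    mul_nonneg (by positivity) (h.memoryError_nonneg s (τ T).2)
  have hdrift : 1 / (2 * A.γ) * (2 * (A.γ * β) * ‖(τ T).1 - σ₀.1‖)
      = β * ‖(τ T).1 - σ₀.1‖ := by field_simp
  have hend : 1 / (2 * A.γ) * (7 / 2 * ‖σ₀.1 - ys‖ ^ 2 + 3 / 2 * ‖(τ T).1 - ys‖ ^ 2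
        + 16 / 5 * (A.γ * β) ^ 2)
      = 7 / (4 * A.γ) * ‖σ₀.1 - ys‖ ^ 2 + 3 / 2 * (1 / (2 * A.γ) * ‖(τ T).1 - ys‖ ^ 2)
        + 8 / 5 * A.γ * β ^ 2 := by
    field_simp
    ring
  rw [mul_add, hdrift, hend] at hdist
  rw [mul_sub, lyapunov, primalMean]
  linarith

lemma expected_objective_gap_primalMean_le {S : Type} [Fintype S] [Inhabited S] {w : S → ℝ}
    {sel : S → Fin n} {upd : S → Finset (Fin n)} {q : ℝ} (h : A.IsAdmissible ψ ω Lψ Lω)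
    (hG : IsProxMapOn A.γ G D A.proxg) (hH : IsProxMapOn A.γ H Set.univ A.proxh)
    (hGconv : ConvexOn ℝ D G) (hHconv : ConvexOn ℝ Set.univ H) (hβ : 0 ≤ β)
    (hlip : ∀ x y, H x ≤ H y + β * ‖x - y‖) (hys : A.IsFixedPt ys)
    (hS : IsUniformSampling w sel upd q) (hq : 0 < q) (σ₀ : E × (Fin n → E)) {T : ℕ}
    (hT : 0 < T) :
    ∑ v, prodW w T v * (meanAdd ψ ω (A.primalMean sel upd σ₀ T (extSeq T v))
          + G (A.primalMean sel upd σ₀ T (extSeq T v))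
          + H (A.primalMean sel upd σ₀ T (extSeq T v))
          - (meanAdd ψ ω (A.proxh ys) + G (A.proxh ys) + H (A.proxh ys)))
      ≤ (T : ℝ)⁻¹ * (5 / (2 * A.γ) * ‖σ₀.1 - ys‖ ^ 2 + 8 / 5 * A.γ * β ^ 2
          + 2 * (n / q) * A.memoryError (Lψ + Lω) (A.proxh ys) σ₀.2) := by
  rw [le_inv_mul_iff₀ (Nat.cast_pos.2 hT), mul_sum]
  have hpotential := sum_prodW_mul_cost_add_potential_le hS.nonneg hS.sum_eq_one
    (step := fun d => A.step (sel d) (upd d))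
    (c := fun d σ => A.noise (meanAdd ψ ω) (A.proxh ys) σ (sel d))
    (Φ := fun σ => 3 / 2 * A.lyapunov (Lψ + Lω) q ys σ)
    (h.sum_mul_noise_add_lyapunov_step_le hG hH hys hS hq) T σ₀
  calc _ ≤ _ := sum_le_sum fun v _ => (mul_left_comm _ _ _).trans_le
        (mul_le_mul_of_nonneg_left (h.mul_objective_gap_primalMean_le hG hH hGconv hHconv hβ hlip
          hys hq.le sel upd σ₀ hT (extSeq T v)) (prodW_nonneg hS.nonneg T v))
    _ ≤ 3 / 2 * A.lyapunov (Lψ + Lω) q ys σ₀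
        + (7 / (4 * A.γ) * ‖σ₀.1 - ys‖ ^ 2 + 8 / 5 * A.γ * β ^ 2) := by
        simp only [mul_add (prodW w T _) (_ + _) (_ + _), sum_add_distrib, ← sum_mul,
          sum_prodW hS.sum_eq_one, one_mul]
        gcongr
        exact hpotential
    _ = _ := by
        have := h.γ_pos
        rw [lyapunov]
        field_simp
        ring

lemma expected_objective_gap_primalMean_le_of_objective_le {S : Type} [Fintype S] [Inhabited S]
    {w : S → ℝ} {sel : S → Fin n} {upd : S → Finset (Fin n)} {q : ℝ}
    (h : A.IsAdmissible ψ ω Lψ Lω) (hG : IsProxMapOn A.γ G D A.proxg)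
    (hH : IsProxMapOn A.γ H Set.univ A.proxh) (hGconv : ConvexOn ℝ D G)
    (hHconv : ConvexOn ℝ Set.univ H) (hβ : 0 ≤ β) (hlip : ∀ x y, H x ≤ H y + β * ‖x - y‖)
    (hys : A.IsFixedPt ys) (hS : IsUniformSampling w sel upd q) (hq : 0 < q)
    (σ₀ : E × (Fin n → E)) {T : ℕ} (hT : 0 < T) {x : E} (hx : x ∈ D)
    (hle : meanAdd ψ ω x + G x + H x
      ≤ meanAdd ψ ω (A.proxh ys) + G (A.proxh ys) + H (A.proxh ys)) :
    ∑ v, prodW w T v * (meanAdd ψ ω (A.primalMean sel upd σ₀ T (extSeq T v))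
          + G (A.primalMean sel upd σ₀ T (extSeq T v))
          + H (A.primalMean sel upd σ₀ T (extSeq T v))
          - (meanAdd ψ ω x + G x + H x))
      ≤ (T : ℝ)⁻¹ * (5 / (2 * A.γ) * ‖σ₀.1 - ys‖ ^ 2 + 8 / 5 * A.γ * β ^ 2
          + 2 * (n / q) * A.memoryError (Lψ + Lω) x σ₀.2) := by
  have hvalue : meanAdd ψ ω x + G x + H x
      = meanAdd ψ ω (A.proxh ys) + G (A.proxh ys) + H (A.proxh ys) := by
    linarith [h.objective_add_bregman_le hG hH hys hx, h.smooth_f.bregman_nonneg x (A.proxh ys)]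
  have hmemory : A.memoryError (Lψ + Lω) x σ₀.2 = A.memoryError (Lψ + Lω) (A.proxh ys) σ₀.2 := by
    simp only [memoryError, h.gradψ_eq_of_objective_le hG hH hys hx hle]
  rw [hvalue, hmemory]
  exact h.expected_objective_gap_primalMean_le hG hH hGconv hHconv hβ hlip hys hS hq σ₀ hT

end IsAdmissible

end Trajectory

end VRTOS

section ExtendedReal

variable {E : Type*}

/-- The primal objective `P = f + g + h`. -/
def primalObjective (f : E → ℝ) (g h : E → EReal) (x : E) : EReal :=
  (f x : EReal) + g x + h x

lemma primalObjective_eq_coe (f : E → ℝ) {g h : E → EReal} {x : E} (hg : g x ≠ ⊤) (hg' : g x ≠ ⊥)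
    (hh : h x ≠ ⊤) (hh' : h x ≠ ⊥) :
    primalObjective f g h x = ((f x + (g x).toReal + (h x).toReal : ℝ) : EReal) := by
  rw [primalObjective, EReal.coe_add, EReal.coe_add, EReal.coe_toReal hg hg',
    EReal.coe_toReal hh hh']

lemma coe_sum_toEReal {ι : Type*} (s : Finset ι) (F : ι → ℝ) :
    ((∑ i ∈ s, F i : ℝ) : EReal) = ∑ i ∈ s, (F i : EReal) :=
  map_sum (⟨⟨Real.toEReal, EReal.coe_zero⟩, EReal.coe_add⟩ : ℝ →+ EReal) F s

/-- Convex functions with values in `(-∞, +∞]` that are not identically `+∞`. -/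
structure IsProperConvex [AddCommGroup E] [Module ℝ E] (g : E → EReal) : Prop where
  exists_ne_top : ∃ x, g x ≠ ⊤
  ne_bot : ∀ x, g x ≠ ⊥
  convex : ∀ x y : E, ∀ a b : ℝ, 0 ≤ a → 0 ≤ b → a + b = 1 →
    g (a • x + b • y) ≤ (a : EReal) * g x + (b : EReal) * g y

/-- `z` minimizes `w ↦ g w + ‖a - w‖² / (2γ)`, that is, `z = prox_{γg}(a)`. -/
def IsProxPoint [NormedAddCommGroup E] (γ : ℝ) (g : E → EReal) (a z : E) : Prop :=
  ∀ w, g z + (((1 / (2 * γ)) * ‖a - z‖ ^ 2 : ℝ) : EReal)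
    ≤ g w + (((1 / (2 * γ)) * ‖a - w‖ ^ 2 : ℝ) : EReal)

namespace IsProperConvex

variable {g : E → EReal}

section Module

variable [AddCommGroup E] [Module ℝ E]

lemma coe_toReal (hg : IsProperConvex g) {x : E} (hx : g x ≠ ⊤) : ((g x).toReal : EReal) = g x :=
  EReal.coe_toReal hx (hg.ne_bot x)

lemma convexOn_toReal (hg : IsProperConvex g) :
    ConvexOn ℝ {x | g x ≠ ⊤} (fun x => (g x).toReal) := by
  have hsegment {x y : E} (hx : g x ≠ ⊤) (hy : g y ≠ ⊤) {a b : ℝ} (ha : 0 ≤ a) (hb : 0 ≤ b)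
      (hab : a + b = 1) :
      g (a • x + b • y) ≤ ((a * (g x).toReal + b * (g y).toReal : ℝ) : EReal) := by
    rw [EReal.coe_add, EReal.coe_mul, EReal.coe_mul, hg.coe_toReal hx, hg.coe_toReal hy]
    exact hg.convex x y a b ha hb hab
  have hdomain : Convex ℝ {x | g x ≠ ⊤} := fun x hx y hy a b ha hb hab =>
    ne_top_of_le_ne_top (EReal.coe_ne_top _) (hsegment hx hy ha hb hab)
  refine ⟨hdomain, fun x hx y hy a b ha hb hab => ?_⟩
  have hle := hsegment hx hy ha hb hab
  rwa [← hg.coe_toReal (hdomain hx hy ha hb hab), EReal.coe_le_coe_iff] at hle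

end Module

section Normed

variable [NormedAddCommGroup E] [Module ℝ E] {β γ : ℝ} {a z : E}

lemma ne_top_of_lipschitz (hg : IsProperConvex g)
    (hlip : ∀ x y, g x ≤ g y + ((β * ‖x - y‖ : ℝ) : EReal)) (x : E) : g x ≠ ⊤ := by
  obtain ⟨y, hy⟩ := hg.exists_ne_top
  exact ne_top_of_le_ne_top (EReal.add_ne_top hy (EReal.coe_ne_top _)) (hlip x y)

lemma toReal_le_of_lipschitz (hg : IsProperConvex g)
    (hlip : ∀ x y, g x ≤ g y + ((β * ‖x - y‖ : ℝ) : EReal)) (x y : E) :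
    (g x).toReal ≤ (g y).toReal + β * ‖x - y‖ := by
  rw [← EReal.coe_le_coe_iff, EReal.coe_add, hg.coe_toReal (hg.ne_top_of_lipschitz hlip x),
    hg.coe_toReal (hg.ne_top_of_lipschitz hlip y)]
  exact hlip x y

lemma ne_top_of_isProxPoint (hg : IsProperConvex g) (hz : IsProxPoint γ g a z) : g z ≠ ⊤ := by
  obtain ⟨w, hw⟩ := hg.exists_ne_top
  intro htop
  have hle := hz w
  rw [htop, EReal.top_add_coe, top_le_iff] at hle
  exact EReal.add_ne_top hw (EReal.coe_ne_top _) hle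

lemma toReal_add_le_of_isProxPoint (hg : IsProperConvex g) (hz : IsProxPoint γ g a z) {w : E}
    (hw : g w ≠ ⊤) :
    (g z).toReal + 1 / (2 * γ) * ‖a - z‖ ^ 2 ≤ (g w).toReal + 1 / (2 * γ) * ‖a - w‖ ^ 2 := by
  rw [← EReal.coe_le_coe_iff, EReal.coe_add, EReal.coe_add, hg.coe_toReal hw,
    hg.coe_toReal (hg.ne_top_of_isProxPoint hz)]
  exact hz w

end Normed

variable [NormedAddCommGroup E] [InnerProductSpace ℝ E]

lemma isProxMapOn_toReal (hg : IsProperConvex g) {γ : ℝ} {P : E → E}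
    (hP : ∀ a, IsProxPoint γ g a (P a)) :
    IsProxMapOn γ (fun x => (g x).toReal) {x | g x ≠ ⊤} P where
  mem a := hg.ne_top_of_isProxPoint (hP a)
  subgradient a := by
    convert isSubgradientOn_of_add_mul_norm_sq_le hg.convexOn_toReal
      (hg.ne_top_of_isProxPoint (hP a)) fun w hw => hg.toReal_add_le_of_isProxPoint (hP a) hw
      using 2
    rw [one_div, mul_inv, mul_inv_cancel_left₀ two_ne_zero]

end IsProperConvex

end ExtendedReal

theorem vrtos_primal_rate_general {E : Type*} [NormedAddCommGroup E] [InnerProductSpace ℝ E]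
    [CompleteSpace E] {n : ℕ} {A : VRTOS E n} {ψ : Fin n → E → ℝ} {ω : E → ℝ} {Lψ Lω : ℝ}
    (hA : A.IsAdmissible ψ ω Lψ Lω) {g h : E → EReal} (hg : IsProperConvex g)
    (hh : IsProperConvex h) {β : ℝ} (hβ : 0 ≤ β)
    (hlip : ∀ x y, h x ≤ h y + ((β * ‖x - y‖ : ℝ) : EReal))
    (hproxg : ∀ a, IsProxPoint A.γ g a (A.proxg a)) (hproxh : ∀ a, IsProxPoint A.γ h a (A.proxh a))
    {xs : E} (hxs : ∀ x, primalObjective (meanAdd ψ ω) g h xs ≤ primalObjective (meanAdd ψ ω) g h x)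
    {ys : E} (hys : A.IsFixedPt ys) {S : Type} [Fintype S] [Inhabited S] {w : S → ℝ}
    {sel : S → Fin n} {upd : S → Finset (Fin n)} {q : ℝ} (hS : IsUniformSampling w sel upd q)
    (hq : 0 < q) (σ₀ : E × (Fin n → E)) {T : ℕ} (hT : 0 < T) :
    ∑ v, (prodW w T v : EReal)
        * (primalObjective (meanAdd ψ ω) g h (A.primalMean sel upd σ₀ T (extSeq T v))
          - primalObjective (meanAdd ψ ω) g h xs)
      ≤ (((T : ℝ)⁻¹ * (5 / (2 * A.γ) * ‖σ₀.1 - ys‖ ^ 2 + 8 / 5 * A.γ * β ^ 2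
          + 2 * (n / q) * A.memoryError (Lψ + Lω) xs σ₀.2) : ℝ) : EReal) := by
  have hfinite := hh.ne_top_of_lipschitz hlip
  have hdomain : {x | h x ≠ ⊤} = Set.univ := Set.eq_univ_of_forall hfinite
  have hG := hg.isProxMapOn_toReal hproxg
  have hH := hdomain ▸ hh.isProxMapOn_toReal hproxh
  have hreal {x : E} (hx : g x ≠ ⊤) :
      primalObjective (meanAdd ψ ω) g h x
        = ((meanAdd ψ ω x + (g x).toReal + (h x).toReal : ℝ) : EReal) :=
    primalObjective_eq_coe _ hx (hg.ne_bot x) (hfinite x) (hh.ne_bot x)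
  have hoptimal := hxs (A.proxh ys)
  have hxs_mem : g xs ≠ ⊤ := by
    intro htop
    rw [hreal (hys.proxh_mem hG), primalObjective, htop, EReal.coe_add_top,
      EReal.top_add_of_ne_bot (hh.ne_bot xs), top_le_iff] at hoptimal
    exact EReal.coe_ne_top _ hoptimal
  rw [hreal hxs_mem, hreal (hys.proxh_mem hG), EReal.coe_le_coe_iff] at hoptimal
  have hmean v :=
    hreal (VRTOS.primalMean_mem hg.convexOn_toReal.1 hG.mem sel upd σ₀ hT (extSeq T v))
  simp only [hmean, hreal hxs_mem, ← EReal.coe_sub, ← EReal.coe_mul, ← coe_sum_toEReal,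
    EReal.coe_le_coe_iff]
  exact hA.expected_objective_gap_primalMean_le_of_objective_le hG hH hg.convexOn_toReal
    (hdomain ▸ hh.convexOn_toReal) hβ (hh.toReal_le_of_lipschitz hlip) hys hS hq σ₀ hT hxs_mem
    hoptimal

lemma rate_constants_le {n : ℕ} (hn : 0 < n) {L q t β a b H₀ : ℝ} (hL : 0 < L) (hq : 0 < q)
    (ht : 0 ≤ t) (hH₀ : 0 ≤ H₀) :
    (t + 1)⁻¹ * (5 / (2 * (1 / (3 * L))) * b ^ 2 + 8 / 5 * (1 / (3 * L)) * β ^ 2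
        + 2 * (n / q) * H₀)
      ≤ 10 * n / (q * (t + 1)) * (6 * L * q / (20 * n) * a ^ 2 + 3 * L * q / (2 * n) * b ^ 2
        + q / (15 * n * L) * β ^ 2 + H₀) := by
  have hsplit : 10 * n / (q * (t + 1)) * (6 * L * q / (20 * n) * a ^ 2
        + 3 * L * q / (2 * n) * b ^ 2 + q / (15 * n * L) * β ^ 2 + H₀)
      = (t + 1)⁻¹ * (5 / (2 * (1 / (3 * L))) * b ^ 2 + 8 / 5 * (1 / (3 * L)) * β ^ 2
        + 2 * (n / q) * H₀)
        + (t + 1)⁻¹ * (3 * L * a ^ 2 + 15 / 2 * L * b ^ 2 + 2 / (15 * L) * β ^ 2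
          + 8 * (n / q) * H₀) := by
    field_simp
    ring
  rw [hsplit]
  exact le_add_of_nonneg_right (by positivity)

/-- Theorem 1, primal suboptimality rate of VR-TOS under a Lipschitz
assumption on `h`.  With `γ = 1/(3 L_f)` and `h` `β_h`-Lipschitz, for any fixed point `y*`
of `G_γ` and any minimizer `x*` of the primal objective `P = f + g + h`,
`E[P(x̄_t) − P(x*)] ≤ (10n/(q(t+1))) [ (6 L_f q/(20n))‖z_0 − x*‖²
  + (3 L_f q/(2n))‖y_0 − y*‖² + (q/(15 n L_f)) β_h² + H_0 ]`. -/
theorem vrtos_primal_rate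
    {n : ℕ} (hn : 0 < n)
    (ψ : Fin n → EuclideanSpace ℝ (Fin p) → ℝ)
    (gradψ : Fin n → EuclideanSpace ℝ (Fin p) → EuclideanSpace ℝ (Fin p))
    (Lψ : ℝ)
    (hψconv : ∀ i, ConvexOn ℝ Set.univ (ψ i))
    (hψdiff : ∀ i x, HasGradientAt (ψ i) (gradψ i x) x)
    (hψlip : ∀ i x y, ‖gradψ i x - gradψ i y‖ ≤ Lψ * ‖x - y‖)
    (ω : EuclideanSpace ℝ (Fin p) → ℝ)
    (gradω : EuclideanSpace ℝ (Fin p) → EuclideanSpace ℝ (Fin p))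
    (Lω : ℝ)
    (hωconv : ConvexOn ℝ Set.univ ω)
    (hωdiff : ∀ x, HasGradientAt ω (gradω x) x)
    (hωlip : ∀ x y, ‖gradω x - gradω y‖ ≤ Lω * ‖x - y‖)
    (Lf : ℝ) (hLf : Lf = Lψ + Lω) (hLfpos : 0 < Lf)
    (f : EuclideanSpace ℝ (Fin p) → ℝ)
    (hf : ∀ x, f x = (n : ℝ)⁻¹ * ∑ j, ψ j x + ω x)
    (gradf : EuclideanSpace ℝ (Fin p) → EuclideanSpace ℝ (Fin p))
    (hgradf : ∀ x, gradf x = (n : ℝ)⁻¹ • ∑ j, gradψ j x + gradω x)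
    -- the nonsmooth terms, their proximal operators, and the qualification condition
    (g h : EuclideanSpace ℝ (Fin p) → EReal)
    (hg : ProperLscConvex g) (hh : ProperLscConvex h)
    (hqual : (intrinsicInterior ℝ {x | g x ≠ ⊤} ∩ intrinsicInterior ℝ {x | h x ≠ ⊤}).Nonempty)
    -- `h` is `β_h`-Lipschitz
    (βh : ℝ) (hβh : 0 ≤ βh)
    (hhlip : ∀ x y, h x ≤ h y + ((βh * ‖x - y‖ : ℝ) : EReal))
    -- the step size γ = 1/(3 L_f)
    (γ : ℝ) (hγ : γ = 1 / (3 * Lf))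
    (proxg proxh : EuclideanSpace ℝ (Fin p) → EuclideanSpace ℝ (Fin p))
    (hproxg : ∀ x, IsProx γ g x (proxg x))
    (hproxh : ∀ x, IsProx γ h x (proxh x))
    -- a minimizer x* of the primal objective and a fixed point y* of G_γ
    (xstar : EuclideanSpace ℝ (Fin p))
    (hxstar : ∀ x, ((f xstar : ℝ) : EReal) + g xstar + h xstar
        ≤ ((f x : ℝ) : EReal) + g x + h x)
    (ystar : EuclideanSpace ℝ (Fin p))
    (hfix : ystar - proxh ystar
        + proxg (2 • proxh ystar - ystar - γ • gradf (proxh ystar)) = ystar)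
    -- the per-iteration randomness: the sampled index `sel s` and the uniform
    -- q-memorization update set `upd s`, drawn i.i.d. across iterations
    {S : Type} [Fintype S] [Inhabited S]
    (w : S → ℝ) (hw : ∀ s, 0 ≤ w s) (hw1 : ∑ s, w s = 1)
    (sel : S → Fin n) (upd : S → Finset (Fin n)) (q : ℝ) (hq : 0 < q)
    (hmargsel : ∀ i : Fin n, ∑ s ∈ univ.filter (fun s => sel s = i), w s = 1 / n)
    (hmargupd : ∀ j : Fin n, ∑ s ∈ univ.filter (fun s => j ∈ upd s), w s = q / n)
    -- the VR-TOS process, as a function of the infinite sequence of draws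
    (y z x v : ℕ → (ℕ → S) → EuclideanSpace ℝ (Fin p))
    (α : ℕ → Fin n → (ℕ → S) → EuclideanSpace ℝ (Fin p))
    (y0 : EuclideanSpace ℝ (Fin p)) (hy0 : ∀ r, y 0 r = y0)
    (α0 : Fin n → EuclideanSpace ℝ (Fin p)) (hα0 : ∀ j r, α 0 j r = α0 j)
    (hz : ∀ t r, z t r = proxh (y t r))
    (hv : ∀ t r, v t r = gradψ (sel (r t)) (z t r) - α t (sel (r t)) r
        + (n : ℝ)⁻¹ • ∑ j, α t j r + gradω (z t r))
    (hx : ∀ t r, x t r = proxg (2 • z t r - y t r - γ • v t r))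
    (hy : ∀ t r, y (t + 1) r = y t r + x t r - z t r)
    (hα : ∀ t j r, α (t + 1) j r
        = if j ∈ upd (r t) then gradψ j (z t r) else α t j r)
    -- the ergodic (averaged) primal iterate
    (xbar : ℕ → (ℕ → S) → EuclideanSpace ℝ (Fin p))
    (hxbar : ∀ t r, xbar t r = ((t : ℝ) + 1)⁻¹ • ∑ k ∈ Finset.range (t + 1), x k r)
    (z0 : EuclideanSpace ℝ (Fin p)) (hz0 : z0 = proxh y0)
    (H0 : ℝ) (hH0 : H0 = 1 / (2 * n * Lf) * ∑ i, ‖α0 i - gradψ i xstar‖ ^ 2) :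
    ∀ t : ℕ,
      ∑ vdraw : Fin (t + 1) → S,
          ((prodW w (t + 1) vdraw : ℝ) : EReal)
            * ((((f (xbar t (extSeq (t + 1) vdraw)) : ℝ) : EReal)
                  + g (xbar t (extSeq (t + 1) vdraw)) + h (xbar t (extSeq (t + 1) vdraw)))
                - (((f xstar : ℝ) : EReal) + g xstar + h xstar))
        ≤ ((10 * n / (q * (t + 1))
            * (6 * Lf * q / (20 * n) * ‖z0 - xstar‖ ^ 2
              + 3 * Lf * q / (2 * n) * ‖y0 - ystar‖ ^ 2
              + q / (15 * n * Lf) * βh ^ 2 + H0) : ℝ) : EReal) := by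
  intro t
  obtain rfl : f = meanAdd ψ ω := funext hf
  obtain rfl : gradf = meanAdd gradψ gradω := funext hgradf
  subst hLf hγ hz0 hH0
  let A : VRTOS (EuclideanSpace ℝ (Fin p)) n := ⟨1 / (3 * (Lψ + Lω)), gradψ, gradω, proxg, proxh⟩
  have hA : A.IsAdmissible ψ ω Lψ Lω :=
    ⟨hn, fun i => ⟨hψconv i, hψdiff i, hψlip i⟩, ⟨hωconv, hωdiff, hωlip⟩, hLfpos, by positivity,
      (mul_right_comm _ _ _).trans_le (mul_one_div_cancel (by positivity)).le⟩
  have hstate (r : ℕ → S) (k : ℕ) :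
      A.trajectory sel upd (y0, α0) r k = (y k r, fun j => α k j r) := by
    rw [← hy0 r, ← funext fun j => hα0 j r]
    refine VRTOS.trajectory_eq_of_step (τ := fun k => (y k r, fun j => α k j r)) (fun k => ?_) k
    simp only [VRTOS.step, VRTOS.primalPoint, VRTOS.direction, hy, hx, hv, hz, hα, A]
  have hmean (r : ℕ → S) : xbar t r = A.primalMean sel upd (y0, α0) (t + 1) r := by
    simp only [hxbar, VRTOS.primalMean, hstate, Nat.cast_succ, VRTOS.primalPoint,
      VRTOS.direction, hx, hv, hz, A]
  have hrate := vrtos_primal_rate_general hA ⟨hg.proper, hg.ne_bot, hg.convex⟩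
    ⟨hh.proper, hh.ne_bot, hh.convex⟩ hβh hhlip hproxg hproxh hxstar hfix
    ⟨hw, hw1, hmargsel, hmargupd⟩ hq (y0, α0) t.succ_pos
  simp only [hmean]
  refine hrate.trans (EReal.coe_le_coe_iff.2 ?_)
  rw [Nat.cast_succ]
  exact rate_constants_le hn hLfpos hq t.cast_nonneg (hA.memoryError_nonneg xstar α0)
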